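/- arXiv:1003.4722 — 2 statements merged into one kernel-verified Lean document; each statement's English description precedes it below -/
import Mathlib

section
/- Let G be a finite group, M, N normal subgroups of G, and p a prime with Sylow p-subgroup S_p, such that M ∩ S_p ≤ Φ(S_p)N. Then O^p(MN/N), the smallest normal subgroup of MN/N with p-group quotient, is a p'-group. -/
/-- `O^p(H)`: the smallest normal subgroup of `H` whose quotient is a `p`-group. -/
def pResidual (p : ℕ) (H : Type*) [Group H] : Subgroup H :=
  ⨅ K ∈ {K : Subgroup H | K.Normal ∧ ∀ h : H, ∃ n : ℕ, h ^ p ^ n ∈ K}, K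

/-!
Since `S_p` is Sylow, `(M ∩ S_p)N/N` is the intersection of the images of `M` and `S_p` in `G/N`,
which reduces everything to Tate's theorem in `G/N`.

For Tate's theorem, let `P` be a Sylow `p`-subgroup, `K` normal with `K ∩ P ≤ Φ(P)`, `L = O^p(K)`
and `Q = L ∩ P`. As `O^p(L) = L`, the group `L` has no nontrivial homomorphism to a `p`-group.
The projection `θ : Q → Q/[Q, P]` is `P`-invariant, so it extends to `Q ⋊ P`; transfer it to
`L ⋊ P`. The transfer is trivial on `L` and takes the value `θ(q)^[L : Q]` at `(q, q⁻¹)`. Up to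
inversion, its restriction to `P` is thus a homomorphism `β : P → Q/[Q, P]` that agrees on `Q` with
a prime-to-`p` power of `θ`. Hence `β` maps `Q` onto `Q/[Q, P]`, and since `Q ≤ Φ(P)` consists of
non-generators, `β` is trivial. So `Q = [Q, P]`, which forces `Q = 1` because `P` is nilpotent.
-/

open Subgroup

section PResidual

variable {p : ℕ} {G H : Type*} [Group G] [Group H]

theorem pResidual_le {K : Subgroup G} (hK : K.Normal) (h : ∀ g : G, ∃ n : ℕ, g ^ p ^ n ∈ K) :
    pResidual p G ≤ K :=
  iInf₂_le K ⟨hK, h⟩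

theorem pResidual_le_ker (f : G →* H) (hH : IsPGroup p H) : pResidual p G ≤ f.ker :=
  pResidual_le f.normal_ker fun g ↦ (hH (f g)).imp fun n hn ↦ by
    rw [MonoidHom.mem_ker, map_pow, hn]

theorem pResidual_le_comap (f : G →* H) : pResidual p G ≤ (pResidual p H).comap f := by
  rw [← map_le_iff_le_comap]
  refine le_iInf₂ fun K hK ↦ map_le_iff_le_comap.mpr ?_
  exact pResidual_le (hK.1.comap f) fun g ↦ (hK.2 (f g)).imp fun n hn ↦ by
    rwa [mem_comap, map_pow]

instance pResidual_characteristic : (pResidual p G).Characteristic :=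
  characteristic_iff_le_comap.mpr fun ϕ ↦ pResidual_le_comap ϕ.toMonoidHom

theorem exists_pow_mem_pResidual [Finite G] (g : G) : ∃ n : ℕ, g ^ p ^ n ∈ pResidual p G := by
  choose! n hn using fun (K : Subgroup G)
    (hK : K.Normal ∧ ∀ h : G, ∃ n : ℕ, h ^ p ^ n ∈ K) ↦ hK.2 g
  obtain ⟨m, hm⟩ := (Set.finite_range n).bddAbove
  refine ⟨m, mem_iInf.mpr fun K ↦ mem_iInf.mpr fun hK ↦ ?_⟩
  rw [← Nat.add_sub_cancel' (hm ⟨K, rfl⟩), pow_add, pow_mul]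
  exact K.pow_mem (hn K hK) _

theorem pResidual_pResidual [Finite G] : pResidual p (pResidual p G) = ⊤ := by
  set L := (pResidual p (pResidual p G)).map (pResidual p G).subtype
  have pow_mem_L (g : G) : ∃ n : ℕ, g ^ p ^ n ∈ L := by
    obtain ⟨m, hm⟩ := exists_pow_mem_pResidual (p := p) g
    obtain ⟨n, hn⟩ := exists_pow_mem_pResidual (p := p) (⟨_, hm⟩ : pResidual p G)
    exact ⟨m + n, _, hn, by simp [pow_add, pow_mul]⟩
  have hle : pResidual p G ≤ L := pResidual_le inferInstance pow_mem_L
  refine eq_top_iff.mpr fun x _ ↦ ?_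
  obtain ⟨y, hy, hyx⟩ := hle x.2
  rwa [← Subtype.ext hyx]

theorem pResidual_eq_top_of_mulEquiv (e : G ≃* H) (h : pResidual p G = ⊤) :
    pResidual p H = ⊤ := by
  refine eq_top_iff.mpr fun y _ ↦ ?_
  have := pResidual_le_comap (p := p) e.toMonoidHom (h ▸ mem_top (e.symm y))
  simpa using this

end PResidual

section RelIndex

variable {G H : Type*} [Group G] [Group H]

theorem relIndex_sup_of_normal (P K : Subgroup G) [K.Normal] :
    P.relIndex (P ⊔ K) = P.relIndex K := by
  let ι := quotientSubgroupOfEmbeddingOfLE P (le_sup_right : K ≤ P ⊔ K)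
  refine (Nat.card_congr (Equiv.ofBijective ι ⟨ι.injective, ?_⟩)).symm
  rintro ⟨x, hx⟩
  obtain ⟨k, hk, y, hy, rfl⟩ := mem_sup_of_normal_left.mp (sup_comm P K ▸ hx)
  refine ⟨QuotientGroup.mk ⟨k, hk⟩, QuotientGroup.eq.mpr ?_⟩
  simpa [mem_subgroupOf] using hy

theorem relIndex_dvd_relIndex_of_le_of_normal (P : Subgroup G) {K L : Subgroup G} [K.Normal]
    (h : K ≤ L) : P.relIndex K ∣ P.relIndex L :=
  calc P.relIndex K
    _ = (P ⊓ L).relIndex K := by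
      rw [← inf_relIndex_right P, ← inf_relIndex_right (P ⊓ L), inf_assoc, inf_eq_right.mpr h]
    _ = (P ⊓ L).relIndex (P ⊓ L ⊔ K) := (relIndex_sup_of_normal _ _).symm
    _ ∣ (P ⊓ L).relIndex L :=
      Dvd.intro _ (relIndex_mul_relIndex _ _ _ le_sup_left (sup_le inf_le_right h))
    _ = P.relIndex L := inf_relIndex_right P L

theorem relIndex_map_map_dvd (f : G →* H) (K L : Subgroup G) :
    (K.map f).relIndex (L.map f) ∣ K.relIndex L := by
  rw [← relIndex_comap]
  exact relIndex_dvd_of_le_left L (le_comap_map f K)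

theorem finite_of_isFiniteRelIndex (P K : Subgroup G) [Finite P] [P.IsFiniteRelIndex K] :
    Finite K :=
  have : Finite (P.subgroupOf K) :=
    ((Set.toFinite (P : Set G)).preimage K.subtype_injective.injOn).to_subtype
  (finite_iff_finite_and_finiteIndex (P.subgroupOf K)).mpr ⟨this, inferInstance⟩

theorem le_of_not_dvd_relIndex {p : ℕ} [Fact p.Prime] {K T : Subgroup G} (hT : IsPGroup p T)
    (h : ¬ p ∣ K.relIndex T) : T ≤ K := by
  have : (K.subgroupOf T).FiniteIndex := ⟨fun h0 ↦ h (h0.symm ▸ dvd_zero p : p ∣ index _)⟩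
  obtain ⟨n, hn⟩ : ∃ n, K.relIndex T = p ^ n := hT.index (K.subgroupOf T)
  have hn0 : n = 0 := by
    by_contra hn0
    exact h (hn ▸ dvd_pow_self p hn0)
  rwa [hn0, pow_zero, relIndex_eq_one] at hn

theorem map_inf_eq_of_not_dvd_relIndex {p : ℕ} [Fact p.Prime] (f : G →* H) {P K : Subgroup G}
    (hP : IsPGroup p P) (hPK : ¬ p ∣ P.relIndex K) :
    (K ⊓ P).map f = K.map f ⊓ P.map f := by
  have hle := map_inf_le K P f
  refine hle.antisymm (le_of_not_dvd_relIndex (hP.map f).to_inf_right fun h ↦ hPK (h.trans ?_))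
  calc ((K ⊓ P).map f).relIndex (K.map f ⊓ P.map f)
    _ ∣ ((K ⊓ P).map f).relIndex (K.map f) :=
      Dvd.intro _ (relIndex_mul_relIndex _ _ _ hle inf_le_left)
    _ ∣ (K ⊓ P).relIndex K := relIndex_map_map_dvd f _ _
    _ = P.relIndex K := inf_relIndex_left K P

end RelIndex

section Frattini

variable {G H : Type*} [Group G] [Group H]

theorem map_frattini_le_frattini_map (f : G →* H) (S : Subgroup G) :
    ((frattini S).map S.subtype).map f ≤ (frattini (S.map f)).map (S.map f).subtype := by
  rintro _ ⟨_, ⟨x, hx, rfl⟩, rfl⟩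
  exact ⟨f.subgroupMap S x,
    frattini_le_comap_frattini_of_surjective (f.subgroupMap_surjective S) hx, rfl⟩

theorem eq_one_of_map_eq_range_of_le_frattini [IsCoatomic (Subgroup G)] (f : G →* H)
    {Q : Subgroup G} (hQ : Q ≤ frattini G) (h : Q.map f = f.range) : f = 1 := by
  have hsup : Q ⊔ f.ker = ⊤ := (map_eq_range_iff.mp h).eq_top
  refine f.ker_eq_top_iff.mp (frattini_nongenerating (eq_top_iff.mpr ?_))
  rw [← hsup, sup_comm]
  exact sup_le_sup_left hQ _

theorem eq_bot_of_le_commutator_top [Group.IsNilpotent G] {Q : Subgroup G} (h : Q ≤ ⁅Q, ⊤⁆) :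
    Q = ⊥ := by
  obtain ⟨n, hn⟩ := Subgroup.nilpotent_iff_lowerCentralSeries.mp ‹Group.IsNilpotent G›
  have hle (k : ℕ) : Q ≤ (⊤ : Subgroup G).lowerCentralSeries k := by
    induction k with
    | zero => exact le_top
    | succ k ih => exact h.trans (commutator_mono ih le_rfl)
  exact le_bot_iff.mp (hn ▸ hle n)

end Frattini

section Transfer

variable {G A : Type*} [Group G] [CommGroup A]

theorem transfer_eq_pow_index_of_conj {H : Subgroup G} [H.FiniteIndex] (ϕ : H →* A) {g : G} {a : A}
    (h : ∀ k : G, ∃ hk : k⁻¹ * g * k ∈ H, ϕ ⟨k⁻¹ * g * k, hk⟩ = a) :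
    ϕ.transfer g = a ^ H.index := by
  let _ := H.fintypeQuotientOfFiniteIndex
  let T : H.LeftTransversal := default
  have smul_eq (q : G ⧸ H) : g⁻¹ • q = q := by
    induction q using QuotientGroup.induction_on with | H k =>
    obtain ⟨hk, -⟩ := h k
    exact QuotientGroup.eq.mpr (by simpa [mul_assoc] using hk)
  rw [MonoidHom.transfer_def ϕ T, leftTransversals.diff, index_eq_card, Nat.card_eq_fintype_card,
    ← Finset.card_univ]
  refine Finset.prod_eq_pow_card fun q _ ↦ ?_
  simp only [smul_apply_eq_smul_apply_inv_smul, smul_eq, smul_eq_mul, ← mul_assoc]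
  exact (h _).2

variable {P N : Subgroup G} [N.Normal]

variable (P N) in
/-- The semidirect product `N ⋊ P` for the conjugation action of a subgroup `P` on a normal
subgroup `N`. It serves as a split replacement for the product `NP`. -/
abbrev ConjSemidirect : Type _ :=
  N ⋊[(MulAut.conjNormal (H := N)).comp P.subtype] P

variable (P N) in
/-- The subgroup `(N ∩ P) ⋊ P` of `N ⋊ P`, the preimage of `P` under multiplication
`N ⋊ P → G`. -/
def infConjSemidirect : Subgroup (ConjSemidirect P N) where
  carrier := {x | (x.left : G) ∈ P}
  one_mem' := P.one_mem
  mul_mem' {x y} hx hy := by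
    simpa using P.mul_mem hx (P.mul_mem (P.mul_mem x.right.2 hy) (P.inv_mem x.right.2))
  inv_mem' {x} hx := by
    simpa [mul_assoc] using
      P.mul_mem (P.mul_mem (P.inv_mem x.right.2) (P.inv_mem hx)) x.right.2

theorem index_infConjSemidirect : (infConjSemidirect P N).index = P.relIndex N := by
  let ι : N →* ConjSemidirect P N := SemidirectProduct.inl
  have : ι.range.Normal := by
    rw [SemidirectProduct.range_inl_eq_ker_rightHom]
    infer_instance
  have hsup : infConjSemidirect P N ⊔ ι.range = ⊤ := by
    refine eq_top_iff.mpr fun x _ ↦ ?_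
    rw [← SemidirectProduct.inl_left_mul_inr_right x, sup_comm]
    exact mul_mem_sup ⟨x.left, rfl⟩ P.one_mem
  calc (infConjSemidirect P N).index
    _ = (infConjSemidirect P N).relIndex ι.range := by
      rw [← relIndex_top_right, ← hsup, relIndex_sup_of_normal]
    _ = ((infConjSemidirect P N).comap ι).index := (index_comap _ _).symm
    _ = P.relIndex N := rfl

/-- The extension to `(N ∩ P) ⋊ P`, trivial on `P`, of a `P`-invariant homomorphism on `N ∩ P`. -/
def extendInfConjSemidirect (θ : N.subgroupOf P →* A)
    (hθ : ∀ (y : P) (q : N.subgroupOf P), θ (MulAut.conjNormal y q) = θ q) :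
    infConjSemidirect P N →* A where
  toFun x := θ ⟨⟨x.1.left, x.2⟩, x.1.left.2⟩
  map_one' := map_one θ
  map_mul' x y := by
    rw [← hθ x.1.right ⟨⟨y.1.left, y.2⟩, y.1.left.2⟩, ← map_mul]
    congr 1

theorem exists_monoidHom_eq_pow_relIndex [P.IsFiniteRelIndex N] (θ : N.subgroupOf P →* A)
    (hθ : ∀ (y : P) (q : N.subgroupOf P), θ (MulAut.conjNormal y q) = θ q)
    (hN : ∀ f : N →* A, f = 1) :
    ∃ β : P →* A, ∀ q : N.subgroupOf P, β q = θ q ^ P.relIndex N := by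
  have : (infConjSemidirect P N).FiniteIndex :=
    ⟨index_infConjSemidirect.trans_ne relIndex_ne_zero⟩
  let V := (extendInfConjSemidirect θ hθ).transfer
  refine ⟨(V.comp SemidirectProduct.inr)⁻¹, fun q ↦ ?_⟩
  let n : N := ⟨q, q.2⟩
  -- `(q, q⁻¹)` lies in the kernel of multiplication `N ⋊ P → G`, which centralizes `N`; its
  -- conjugates are therefore the `(y q y⁻¹, y q⁻¹ y⁻¹)` with `y ∈ P`, on all of which `θ` agrees.
  let z : ConjSemidirect P N := SemidirectProduct.inl n * SemidirectProduct.inr (q : P)⁻¹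
  have hVz : V z = θ q ^ P.relIndex N := by
    rw [← index_infConjSemidirect]
    refine transfer_eq_pow_index_of_conj _ fun k ↦ ?_
    have hconj : ((k⁻¹ * z * k).left : G) =
        ((MulAut.conjNormal k.right⁻¹ q : N.subgroupOf P) : P) := by
      simp [z, n, mul_assoc]
    have hmem : ((k⁻¹ * z * k).left : G) ∈ P := by
      rw [hconj]
      exact SetLike.coe_mem _
    refine ⟨hmem, ?_⟩
    rw [← hθ k.right⁻¹ q]
    exact congrArg θ (Subtype.ext (Subtype.ext hconj))
  have hVn : V (SemidirectProduct.inl n) = 1 :=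
    DFunLike.congr_fun (hN (V.comp SemidirectProduct.inl)) n
  rw [← hVz, map_mul, hVn, one_mul, MonoidHom.inv_apply, map_inv, map_inv]
  rfl

end Transfer

section Tate

variable {p : ℕ} [Fact p.Prime] {G : Type*} [Group G] {P : Subgroup G} [Finite P]

theorem eq_one_of_surjective_of_conj_invariant (hP : IsPGroup p P) {N : Subgroup G} [N.Normal]
    (hN : pResidual p N = ⊤) (hPN : ¬ p ∣ P.relIndex N) (h : N.subgroupOf P ≤ frattini P)
    {A : Type*} [CommGroup A] {θ : N.subgroupOf P →* A} (hθ_surj : Function.Surjective θ)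
    (hθ : ∀ (y : P) (q : N.subgroupOf P), θ (MulAut.conjNormal y q) = θ q) : θ = 1 := by
  have hA : IsPGroup p A := (hP.to_subgroup _).of_surjective θ hθ_surj
  have hom_eq_one (f : N →* A) : f = 1 :=
    f.ker_eq_top_iff.mp (eq_top_iff.mpr (hN ▸ pResidual_le_ker f hA))
  have : P.IsFiniteRelIndex N := ⟨fun h0 ↦ hPN (h0 ▸ dvd_zero p)⟩
  obtain ⟨β, hβ⟩ := exists_monoidHom_eq_pow_relIndex θ hθ hom_eq_one
  have hβ_map : (N.subgroupOf P).map β = ⊤ := by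
    refine eq_top_iff.mpr fun a _ ↦ ?_
    obtain ⟨b, rfl⟩ := (hA.powEquiv' hPN).surjective a
    obtain ⟨q, rfl⟩ := hθ_surj b
    exact ⟨q, q.2, hβ q⟩
  have hβ_one : β = 1 :=
    eq_one_of_map_eq_range_of_le_frattini β h ((map_le_range β _).antisymm (hβ_map ▸ le_top))
  ext q
  apply (hA.powEquiv' hPN).injective
  rw [IsPGroup.powEquiv_apply, IsPGroup.powEquiv_apply, ← hβ, hβ_one, MonoidHom.one_apply,
    MonoidHom.one_apply, one_pow]

open scoped IsMulCommutative commutatorElement in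
theorem disjoint_of_pResidual_eq_top (hP : IsPGroup p P) {N : Subgroup G} [N.Normal]
    (hN : pResidual p N = ⊤) (hPN : ¬ p ∣ P.relIndex N) (h : N.subgroupOf P ≤ frattini P) :
    Disjoint N P := by
  set Q := N.subgroupOf P
  let R : Subgroup P := ⁅Q, ⊤⁆
  have : IsMulCommutative (Q ⧸ R.subgroupOf Q) :=
    Normal.quotient_commutative_iff_commutator_le.mpr <| commutator_le.mpr fun a _ b _ ↦
      commutator_mem_commutator a.2 (mem_top (b : P))
  let θ : Q →* Q ⧸ R.subgroupOf Q := QuotientGroup.mk' _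
  have hθ (y : P) (q : Q) : θ (MulAut.conjNormal y q) = θ q := by
    refine QuotientGroup.eq.mpr ?_
    have hmem : ⁅y, (q : P)⁻¹⁆ ∈ (⁅Q, ⊤⁆ : Subgroup P) := by
      rw [commutator_comm]
      exact commutator_mem_commutator (mem_top y) (Q.inv_mem q.2)
    simpa [mem_subgroupOf, commutatorElement_def, mul_assoc] using hmem
  have hθ_one : θ = 1 :=
    eq_one_of_surjective_of_conj_invariant hP hN hPN h (QuotientGroup.mk'_surjective _) hθ
  have : Group.IsNilpotent P := hP.isNilpotent
  refine subgroupOf_eq_bot.mp (eq_bot_of_le_commutator_top fun q hq ↦ ?_)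
  exact (QuotientGroup.eq_one_iff (⟨q, hq⟩ : Q)).mp (DFunLike.congr_fun hθ_one ⟨q, hq⟩)

theorem card_pResidual_coprime_of_inf_le_frattini (hP : IsPGroup p P) {K : Subgroup G} [K.Normal]
    (hPK : ¬ p ∣ P.relIndex K) (h : K ⊓ P ≤ (frattini P).map P.subtype) :
    (Nat.card (pResidual p K)).Coprime p := by
  let L := (pResidual p K).map K.subtype
  have hLK : L ≤ K := map_subtype_le _
  have : P.IsFiniteRelIndex K := ⟨fun h0 ↦ hPK (h0 ▸ dvd_zero p)⟩
  have : Finite K := finite_of_isFiniteRelIndex P K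
  let e : pResidual p K ≃* L := (pResidual p K).equivMapOfInjective _ K.subtype_injective
  have hL : pResidual p L = ⊤ := pResidual_eq_top_of_mulEquiv e pResidual_pResidual
  have hPL : ¬ p ∣ P.relIndex L := fun hdvd ↦
    hPK (hdvd.trans (relIndex_dvd_relIndex_of_le_of_normal P hLK))
  have hLP : L.subgroupOf P ≤ frattini P := fun x hx ↦ by
    obtain ⟨y, hy, hyx⟩ := h ⟨hLK hx, x.2⟩
    rwa [← Subtype.ext hyx]
  have hdisj : Disjoint L P := disjoint_of_pResidual_eq_top hP hL hPL hLP
  have hcard : Nat.card (pResidual p K) = P.relIndex L := by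
    rw [Nat.card_congr e.toEquiv, ← inf_relIndex_left, hdisj.eq_bot, relIndex_bot_left]
  rw [hcard, Nat.coprime_comm, (Fact.out : p.Prime).coprime_iff_not_dvd]
  exact hPL

end Tate

theorem pResidual_coprime_of_inter_sylow_general {G : Type*} [Group G] {p : ℕ} (hp : p.Prime)
    (M N : Subgroup G) [M.Normal] [N.Normal] (S : Subgroup G) [Finite S] (hS : IsPGroup p S)
    (hSM : ¬ p ∣ S.relIndex M) (h : M ⊓ S ≤ (frattini S).map S.subtype ⊔ N) :
    Nat.Coprime (Nat.card (pResidual p ↥(Subgroup.map (QuotientGroup.mk' N) (M ⊔ N)))) p := by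
  have : Fact p.Prime := ⟨hp⟩
  let π := QuotientGroup.mk' N
  have hπ (X : Subgroup G) : (X ⊔ N).map π = X.map π := by
    rw [Subgroup.map_sup, QuotientGroup.map_mk'_self, sup_bot_eq]
  have : (M.map π).Normal := Normal.map inferInstance π (QuotientGroup.mk'_surjective N)
  have : Finite (S.map π) := Finite.of_surjective _ (π.subgroupMap_surjective S)
  rw [hπ]
  refine card_pResidual_coprime_of_inf_le_frattini (hS.map π)
    (fun hdvd ↦ hSM (hdvd.trans (relIndex_map_map_dvd π S M))) ?_
  calc M.map π ⊓ S.map π = (M ⊓ S).map π := (map_inf_eq_of_not_dvd_relIndex π hS hSM).symm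
    _ ≤ ((frattini S).map S.subtype ⊔ N).map π := map_mono h
    _ = ((frattini S).map S.subtype).map π := hπ _
    _ ≤ (frattini (S.map π)).map (S.map π).subtype := map_frattini_le_frattini_map π S

/-- If `M, N ⊴ G` and `M ∩ S_p ≤ Φ(S_p)N` for a Sylow `p`-subgroup `S_p` of `G`, then
`O^p(MN/N)` is a `p'`-group. -/
theorem pResidual_coprime_of_inter_sylow {G : Type*} [Group G] [Finite G] {p : ℕ}
    (hp : p.Prime) (M N : Subgroup G) [M.Normal] [N.Normal] (S : Sylow p G)
    (h : M ⊓ (S : Subgroup G) ≤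
      ((frattini ↥(S : Subgroup G)).map (S : Subgroup G).subtype) ⊔ N) :
    Nat.Coprime
      (Nat.card (pResidual p ↥(Subgroup.map (QuotientGroup.mk' N) (M ⊔ N)))) p := by
  have : Fact p.Prime := ⟨hp⟩
  have hdvd : (S : Subgroup G).relIndex M ∣ (S : Subgroup G).index :=
    relIndex_top_right (H := (S : Subgroup G)) ▸ relIndex_dvd_relIndex_of_le_of_normal _ le_top
  exact pResidual_coprime_of_inter_sylow_general hp M N S S.isPGroup'
    (fun hpM ↦ S.not_dvd_index (hpM.trans hdvd)) h
end

section
/- Let p and q be distinct primes and s, t positive integers. Then there are only finitely many natural numbers x with s_p(x) ≤ s and s_q(x) ≤ t, where s_p(x) denotes the digit sum of x in base p. -/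
/-!
If `x` has few nonzero digits in bases `p` and `q`, then at one of boundedly many scales `N` both
expansions have a long gap just below the leading digits. Cutting them there gives a near pair:
integers `a` and `b`, divisible by powers of `p` and `q` that make up almost all of their size, with
`a / b` within `x ^ (-4 / N)` of `1`. So it suffices that near pairs `(a₁, b₁)`, `(a₂, b₂)` at the
same scale cannot have heights with `h₂ ≥ N ^ 3 * h₁` once `h₁` is large.

Put `L = ⌊h₂ / (N * h₁)⌋` and take an `N × N` matrix of polynomials `A k r` of degree at most `L`
such that each `∑ r, A k r * X ^ (N * L * r)` vanishes to order `N * L` at `1`. The coefficients of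
such a sparse polynomial are divided-difference weights at its exponents, so they can be written
down, and `lcm (1, …, D) = exp (O (D))` clears their denominators. At `u = a₁ / b₁`, `v = a₂ / b₂`
the form `∑ r, A k r (u) * u ^ (N * L * r) * v ^ (N - 1 - r)` is small since `u` and `v` are close
to `1`; but its homogenisation is an integer divisible by large powers of `p` and of `q`, hence
large unless it is zero. It is nonzero for some `k`, because `det A` is divisible by
`(X - 1) ^ (N * L)` and has degree exactly `N * L`, so it does not vanish at `u ≠ 1`.
-/

open Finset Polynomial

/-! ### Divided differences -/

theorem sum_choose_mul_nodalWeight_eq_zero {s : Finset ℕ} {b : ℕ} (hb : b < #s - 1) :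
    ∑ n ∈ s, (n.choose b : ℚ) * Lagrange.nodalWeight s (fun n : ℕ ↦ (n : ℚ)) n = 0 := by
  have natDegree_lt : (descPochhammer ℚ b).natDegree < #s - 1 := by
    rwa [descPochhammer_natDegree]
  have degree_lt : (descPochhammer ℚ b).degree < #s :=
    degree_le_natDegree.trans_lt (by exact_mod_cast natDegree_lt.trans_le (Nat.sub_le _ _))
  have key := Lagrange.coeff_eq_sum (Nat.cast_injective.injOn (s := (s : Set ℕ))) degree_lt
  rw [coeff_eq_zero_of_natDegree_lt natDegree_lt] at key
  refine (mul_eq_zero.1 (?_ : (b.factorial : ℚ) * _ = 0)).resolve_left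
    (by exact_mod_cast b.factorial_ne_zero)
  rw [key, mul_sum]
  refine sum_congr rfl fun n _ ↦ ?_
  rw [descPochhammer_eval_eq_descFactorial, Nat.descFactorial_eq_factorial_mul_choose,
    Lagrange.nodalWeight, prod_inv_distrib, Nat.cast_mul, div_eq_mul_inv, mul_assoc]

theorem X_sub_one_pow_dvd_iff {R : Type*} [CommRing R] {P : R[X]} {K : ℕ} :
    (X - 1) ^ K ∣ P ↔ ∀ b < K, (taylor 1 P).coeff b = 0 := by
  rw [← C_1, X_sub_C_pow_dvd_iff, X_pow_dvd_iff]
  rfl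

theorem X_sub_one_pow_dvd_sum_monomial {s : Finset ℕ} {g : ℕ → ℤ} {Λ : ℤ}
    (hg : ∀ n ∈ s, g n * ∏ m ∈ s.erase n, ((n : ℤ) - m) = Λ) :
    (X - 1) ^ (#s - 1) ∣ ∑ n ∈ s, monomial n (g n) := by
  refine X_sub_one_pow_dvd_iff.2 fun b hb ↦ Int.cast_injective (α := ℚ) ?_
  have coeff_eq_nodalWeight : ∀ n ∈ s,
      (g n : ℚ) = Λ * Lagrange.nodalWeight s (fun n : ℕ ↦ (n : ℚ)) n := fun n hn ↦ by
    have prod_ne_zero : ∏ m ∈ s.erase n, ((n : ℚ) - m) ≠ 0 :=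
      prod_ne_zero_iff.2 fun m hm ↦ sub_ne_zero.2 (by exact_mod_cast (ne_of_mem_erase hm).symm)
    rw [Lagrange.nodalWeight, prod_inv_distrib, ← hg n hn]
    push_cast
    rw [mul_inv_cancel_right₀ prod_ne_zero]
  calc (((taylor 1 (∑ n ∈ s, monomial n (g n))).coeff b : ℤ) : ℚ)
      = ∑ n ∈ s, (n.choose b : ℚ) * g n := by
        simp [coeff_X_add_one_pow, mul_comm]
    _ = Λ * ∑ n ∈ s, (n.choose b : ℚ) * Lagrange.nodalWeight s (fun n : ℕ ↦ (n : ℚ)) n := by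
        rw [mul_sum]
        exact sum_congr rfl fun n hn ↦ by rw [coeff_eq_nodalWeight n hn, mul_left_comm]
    _ = ((0 : ℤ) : ℚ) := by rw [sum_choose_mul_nodalWeight_eq_zero hb, mul_zero, Int.cast_zero]

/-! ### Sparse multiples of powers of `X - 1` -/

theorem prod_Ico_add_sub_eq_descFactorial (B ℓ k : ℕ) :
    ∏ m ∈ Ico B (B + ℓ), (((B + k : ℕ) : ℤ) - m) = k.descFactorial ℓ := by
  rw [prod_Ico_eq_prod_range, add_tsub_cancel_left, ← descPochhammer_eval_eq_descFactorial,
    descPochhammer_eval_eq_prod_range]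
  exact prod_congr rfl fun i _ ↦ by push_cast; ring

theorem prod_Ico_sub_add_eq_ascFactorial (n k ℓ : ℕ) :
    ∏ m ∈ Ico (n + k + 1) (n + k + 1 + ℓ), ((n : ℤ) - m) = (-1) ^ ℓ * (k + 1).ascFactorial ℓ := by
  rw [prod_Ico_eq_prod_range, add_tsub_cancel_left, Nat.ascFactorial_eq_prod_range, Nat.cast_prod,
    ← card_range ℓ, ← prod_const, card_range, ← prod_mul_distrib]
  exact prod_congr rfl fun i _ ↦ by push_cast; ring

theorem Ico_erase_add (B i j : ℕ) :
    (Ico B (B + (i + 1 + j))).erase (B + i) = Ico B (B + i) ∪ Ico (B + i + 1) (B + i + 1 + j) := by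
  grind

theorem prod_Ico_erase_add_sub_eq_factorial (B i j : ℕ) :
    ∏ m ∈ (Ico B (B + (i + 1 + j))).erase (B + i), (((B + i : ℕ) : ℤ) - m) =
      (-1) ^ j * (i.factorial * j.factorial) := by
  rw [Ico_erase_add, prod_union (by rw [disjoint_left]; grind), prod_Ico_add_sub_eq_descFactorial,
    Nat.descFactorial_self]
  have upper := prod_Ico_sub_add_eq_ascFactorial (B + i) 0 j
  rw [add_zero, zero_add, Nat.one_ascFactorial] at upper
  rw [upper, mul_left_comm]

theorem factorial_add_one_add (i j : ℕ) :
    (i + 1 + j).factorial = (i + 1 + j) * (i + j).choose i * (i.factorial * j.factorial) := by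
  rw [add_right_comm, Nat.factorial_succ, ← Nat.add_choose_mul_factorial_mul_factorial i j,
    Nat.choose_symm_add]
  ring

theorem choose_dvd_lcmUpto_of_le {n D : ℕ} (hn : n ≤ D) {k : ℕ} (hk : k ≤ n) :
    n.choose k ∣ D.lcmUpto :=
  (Chebyshev.choose_dvd_lcmUpto hk).trans (Finset.lcm_mono (Icc_subset_Icc_right hn))

theorem exists_mul_eq_factorial_mul_lcmUpto {n ℓ D : ℕ} (hn : n ≤ D) (hℓ : ℓ ≤ n) (j : ℕ) :
    ∃ g : ℤ, g * ((-1) ^ j * (ℓ.factorial * n.choose ℓ)) = ℓ.factorial * D.lcmUpto ∧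
      |g| ≤ D.lcmUpto := by
  obtain ⟨c, hc⟩ := choose_dvd_lcmUpto_of_le hn hℓ
  refine ⟨(-1) ^ j * c, ?_, ?_⟩
  · have sign_mul_sign : ((-1 : ℤ) ^ j) * (-1) ^ j = 1 := pow_mul_pow_eq_one j (by norm_num)
    rw [hc]
    push_cast
    linear_combination (ℓ.factorial * n.choose ℓ * c : ℤ) * sign_mul_sign
  · rw [abs_mul, abs_neg_one_pow, one_mul, Nat.abs_cast]
    exact_mod_cast Nat.le_of_dvd D.lcmUpto_pos ⟨_, hc.trans (mul_comm _ _)⟩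

theorem exists_mul_prod_Ico_sub_eq {B ℓ n D : ℕ} (hn : n ≤ D) (hB : B + ℓ ≤ D + 1)
    (hmem : n ∉ Ico B (B + ℓ)) :
    ∃ g : ℤ, g * ∏ m ∈ Ico B (B + ℓ), ((n : ℤ) - m) = ℓ.factorial * D.lcmUpto ∧
      |g| ≤ D.lcmUpto := by
  rcases lt_or_ge n B with hlt | hle
  · obtain ⟨k, rfl⟩ := Nat.exists_eq_add_of_lt hlt
    rw [prod_Ico_sub_add_eq_ascFactorial, Nat.ascFactorial_eq_factorial_mul_choose, Nat.cast_mul]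
    exact exists_mul_eq_factorial_mul_lcmUpto (by lia) (by lia) ℓ
  · obtain ⟨k, rfl⟩ := Nat.exists_eq_add_of_le hle
    rw [prod_Ico_add_sub_eq_descFactorial, Nat.descFactorial_eq_factorial_mul_choose,
      Nat.cast_mul, ← one_mul ((_ : ℤ) * _), ← pow_zero (-1 : ℤ)]
    exact exists_mul_eq_factorial_mul_lcmUpto (by lia) (by grind) 0

theorem exists_mul_prod_Ico_erase_sub_eq_of_mem {B ℓ n : ℕ} (D : ℕ) (hmem : n ∈ Ico B (B + ℓ)) :
    ∃ g : ℤ, g * ∏ m ∈ (Ico B (B + ℓ)).erase n, ((n : ℤ) - m) = ℓ.factorial * D.lcmUpto ∧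
      |g| ≤ 4 ^ ℓ * D.lcmUpto := by
  obtain ⟨i, rfl⟩ := Nat.exists_eq_add_of_le (mem_Ico.1 hmem).1
  obtain ⟨j, rfl⟩ : ∃ j, ℓ = i + 1 + j := ⟨ℓ - (i + 1), by grind⟩
  refine ⟨(-1) ^ j * ((i + 1 + j : ℕ) * (i + j).choose i) * D.lcmUpto, ?_, ?_⟩
  · have sign_mul_sign : ((-1 : ℤ) ^ j) * (-1) ^ j = 1 := pow_mul_pow_eq_one j (by norm_num)
    rw [prod_Ico_erase_add_sub_eq_factorial, factorial_add_one_add]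
    push_cast
    linear_combination ((i + 1 + j) * (i + j).choose i * D.lcmUpto *
      (i.factorial * j.factorial) : ℤ) * sign_mul_sign
  · rw [abs_mul, abs_mul, abs_neg_one_pow, one_mul, abs_mul, Nat.abs_cast, Nat.abs_cast,
      Nat.abs_cast]
    gcongr
    have choose_le : (i + j).choose i ≤ 2 ^ (i + 1 + j) :=
      (Nat.choose_le_two_pow _ _).trans (Nat.pow_le_pow_right two_pos (by lia))
    have length_le : i + 1 + j ≤ 2 ^ (i + 1 + j) := Nat.lt_two_pow_self.le
    calc (((i + 1 + j : ℕ) : ℤ) * (i + j).choose i)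
        ≤ 2 ^ (i + 1 + j) * 2 ^ (i + 1 + j) := by exact_mod_cast Nat.mul_le_mul length_le choose_le
      _ = 4 ^ (i + 1 + j) := by rw [← mul_pow]; norm_num

theorem exists_mul_prod_Ico_erase_sub_eq {B ℓ n D : ℕ} (hn : n ≤ D) (hB : B + ℓ ≤ D + 1) :
    ∃ g : ℤ, g * ∏ m ∈ (Ico B (B + ℓ)).erase n, ((n : ℤ) - m) = ℓ.factorial * D.lcmUpto ∧
      |g| ≤ 4 ^ ℓ * D.lcmUpto := by
  by_cases hmem : n ∈ Ico B (B + ℓ)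
  · exact exists_mul_prod_Ico_erase_sub_eq_of_mem D hmem
  · obtain ⟨g, hg, hle⟩ := exists_mul_prod_Ico_sub_eq hn hB hmem
    rw [erase_eq_of_notMem hmem]
    exact ⟨g, hg, hle.trans (le_mul_of_one_le_left (by positivity) (one_le_pow₀ (by norm_num)))⟩

theorem erase_pairwiseDisjoint {κ α : Type*} [DecidableEq α] {s : Set κ} {f : κ → Finset α}
    (hf : s.PairwiseDisjoint f) (a : α) : s.PairwiseDisjoint fun r ↦ (f r).erase a :=
  hf.mono fun _ ↦ erase_subset _ _

theorem exists_X_sub_one_pow_dvd_sum_blocks {κ : Type*} [Fintype κ] {B ℓ : κ → ℕ} {D : ℕ}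
    (hB : ∀ r, B r + ℓ r ≤ D + 1)
    (hdisj : Pairwise (Function.onFun Disjoint fun r ↦ Ico (B r) (B r + ℓ r))) :
    ∃ g : ℕ → ℤ, (∀ n ≤ D, g n ≠ 0 ∧ |g n| ≤ 4 ^ (∑ r, ℓ r) * D.lcmUpto ^ Fintype.card κ) ∧
      (X - 1) ^ (∑ r, ℓ r - 1) ∣ ∑ r, ∑ i ∈ range (ℓ r), monomial (B r + i) (g (B r + i)) := by
  classical
  choose! c hc hle using fun (n : ℕ) (hn : n ≤ D) (r : κ) ↦
    exists_mul_prod_Ico_erase_sub_eq hn (hB r)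
  have pairwiseDisjoint : ((univ : Finset κ) : Set κ).PairwiseDisjoint
      fun r ↦ Ico (B r) (B r + ℓ r) := fun r _ r' _ h ↦ hdisj h
  refine ⟨fun n ↦ ∏ r, c n r, fun n hn ↦ ⟨?_, ?_⟩, ?_⟩
  · refine prod_ne_zero_iff.2 fun r _ hzero ↦ ?_
    have := hc n hn r
    rw [hzero, zero_mul] at this
    exact mul_ne_zero (Nat.cast_ne_zero.2 (Nat.factorial_ne_zero _))
      (Nat.cast_ne_zero.2 D.lcmUpto_ne_zero) this.symm
  · calc |∏ r, c n r| = ∏ r, |c n r| := abs_prod _ _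
      _ ≤ ∏ r, (4 ^ ℓ r * D.lcmUpto : ℤ) :=
        prod_le_prod (fun _ _ ↦ abs_nonneg _) fun r _ ↦ hle n hn r
      _ = _ := by rw [prod_mul_distrib, prod_pow_eq_pow_sum, prod_const, card_univ]
  · have dvd := X_sub_one_pow_dvd_sum_monomial (s := univ.biUnion fun r ↦ Ico (B r) (B r + ℓ r))
      (g := fun n ↦ ∏ r, c n r) (Λ := ∏ r, ((ℓ r).factorial * D.lcmUpto : ℤ)) fun n hn ↦ by
        obtain ⟨r, -, hr⟩ := mem_biUnion.1 hn
        have hnD : n ≤ D := by have := hB r; grind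
        rw [erase_biUnion, prod_biUnion (erase_pairwiseDisjoint pairwiseDisjoint n),
          ← prod_mul_distrib]
        exact prod_congr rfl fun r _ ↦ hc n hnD r
    simpa only [card_biUnion fun _ _ _ _ h ↦ hdisj h, Nat.card_Ico, sum_biUnion pairwiseDisjoint,
      sum_Ico_eq_sum_range, add_tsub_cancel_left] using dvd

/-! ### Padé systems -/

theorem lcmUpto_le_exp_pow (D : ℕ) : (D.lcmUpto : ℝ) ≤ Real.exp (Real.log 4 + 4) ^ D := by
  rw [← Real.exp_nat_mul, mul_comm,
    ← Real.log_le_iff_le_exp (by exact_mod_cast D.lcmUpto_pos), ← Chebyshev.psi_eq_log_lcmUpto]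
  exact Chebyshev.psi_le_const_mul_self D.cast_nonneg

/-- The rows of `A` are Hermite–Padé approximants at `1` to the functions `X ^ (N * L * r)`: the
`k`-th row combines them into a polynomial vanishing to order `N * L` at `1`. The coefficients of
degree `L` form a diagonal matrix with nonzero diagonal, which makes the rows linearly
independent. -/
structure IsPadeSystem (N L : ℕ) (H : ℝ) (A : Matrix (Fin N) (Fin N) ℤ[X]) : Prop where
  natDegree_le : ∀ k r, (A k r).natDegree ≤ L
  abs_coeff_le : ∀ k r i, |((A k r).coeff i : ℝ)| ≤ H
  coeff_eq_zero : ∀ k r, k ≠ r → (A k r).coeff L = 0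
  coeff_ne_zero : ∀ k, (A k k).coeff L ≠ 0
  dvd : ∀ k, (X - 1) ^ (N * L) ∣ ∑ r : Fin N, X ^ (N * L * r) * A k r

theorem coeff_sum_range_monomial {R : Type*} [Semiring R] (ℓ i : ℕ) (f : ℕ → R) :
    (∑ j ∈ range ℓ, monomial j (f j)).coeff i = if i < ℓ then f i else 0 := by
  simp [coeff_monomial]

theorem pairwise_disjoint_Ico_mul_add {N M : ℕ} {ℓ : Fin N → ℕ} (hℓ : ∀ r, ℓ r ≤ M) :
    Pairwise (Function.onFun Disjoint fun r : Fin N ↦ Ico (M * r : ℕ) (M * r + ℓ r)) := by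
  refine (pairwise_disjoint_on _).2 fun r r' hlt ↦ disjoint_left.2 fun n hn hn' ↦ ?_
  have : M * (r + 1) ≤ M * r' := Nat.mul_le_mul_left M hlt
  have := hℓ r
  grind

/-- The number of coefficients granted to the `r`-th entry of the `k`-th approximant: one more on
the diagonal, which makes the matrix of coefficients of degree `L` diagonal. -/
def padeLength {N : ℕ} (L : ℕ) (k r : Fin N) : ℕ := L + if r = k then 1 else 0

theorem sum_padeLength {N : ℕ} (L : ℕ) (k : Fin N) : ∑ r, padeLength L k r = N * L + 1 := by
  simp [padeLength, sum_add_distrib]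

theorem padeLength_le {N L : ℕ} (k r : Fin N) : padeLength L k r ≤ L + 1 := by
  unfold padeLength
  split_ifs <;> lia

theorem exists_isPadeSystem_lcmUpto {N L : ℕ} (hL : L + 1 ≤ N * L) :
    ∃ A, IsPadeSystem N L (4 ^ (N * L + 1) * (N * (N * L)).lcmUpto ^ N) A := by
  have block_le (r : Fin N) {i : ℕ} (hi : i ≤ N * L) : N * L * r + i ≤ N * (N * L) := by
    have : N * L * (r + 1) ≤ N * L * N := Nat.mul_le_mul_left _ r.2
    lia
  have padeLength_le_mul (k r : Fin N) : padeLength L k r ≤ N * L := (padeLength_le k r).trans hL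
  choose g hg hdvd using fun k ↦ exists_X_sub_one_pow_dvd_sum_blocks
    (fun r ↦ (block_le r (padeLength_le_mul k r)).trans (Nat.le_succ _))
    (pairwise_disjoint_Ico_mul_add (padeLength_le_mul k))
  simp only [sum_padeLength, Fintype.card_fin, add_tsub_cancel_right] at hg hdvd
  let A : Matrix (Fin N) (Fin N) ℤ[X] := fun k r ↦
    ∑ i ∈ range (padeLength L k r), monomial i (g k (N * L * r + i))
  have coeff_A (k r : Fin N) (i : ℕ) :
      (A k r).coeff i = if i < padeLength L k r then g k (N * L * r + i) else 0 :=
    coeff_sum_range_monomial _ _ _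
  refine ⟨A, ?_, fun k r i ↦ ?_, fun k r hkr ↦ ?_, fun k ↦ ?_, fun k ↦ ?_⟩
  · refine fun k r ↦ natDegree_le_iff_coeff_eq_zero.2 fun i hi ↦ ?_
    rw [coeff_A, if_neg (by have := padeLength_le (L := L) k r; lia)]
  · rw [coeff_A]
    split_ifs with hi
    · exact_mod_cast (hg k _ (block_le r (hi.le.trans (padeLength_le_mul k r)))).2
    · simp only [Int.cast_zero, abs_zero]
      positivity
  · rw [coeff_A, if_neg (by simp [padeLength, hkr.symm])]
  · rw [coeff_A, if_pos (by simp [padeLength])]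
    exact (hg k _ (block_le k (by lia))).1
  · simpa only [A, mul_sum, X_pow_mul_monomial, add_comm] using hdvd k

theorem IsPadeSystem.mono {N L : ℕ} {H H' : ℝ} {A : Matrix (Fin N) (Fin N) ℤ[X]}
    (hA : IsPadeSystem N L H A) (hH : H ≤ H') : IsPadeSystem N L H' A :=
  { hA with abs_coeff_le := fun k r i ↦ (hA.abs_coeff_le k r i).trans hH }

theorem exists_isPadeSystem {N : ℕ} (hN : 2 ≤ N) :
    ∃ C : ℝ, 0 < C ∧ ∀ L, 0 < L → ∃ A, IsPadeSystem N L (C ^ L) A := by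
  refine ⟨4 ^ (N + 1) * Real.exp (Real.log 4 + 4) ^ (N * N * N), by positivity,
    fun L hL ↦ ?_⟩
  obtain ⟨A, hA⟩ := exists_isPadeSystem_lcmUpto (N := N) (L := L) (by nlinarith)
  refine ⟨A, hA.mono ?_⟩
  rw [mul_pow, ← pow_mul, ← pow_mul,
    show N * N * N * L = N * (N * L) * N by ring, pow_mul _ (N * (N * L))]
  gcongr
  · norm_num
  · nlinarith
  · exact lcmUpto_le_exp_pow _

/-! ### Nonvanishing -/

section Determinants

variable {R κ : Type*} [CommRing R] [Fintype κ] [DecidableEq κ]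

theorem dvd_det_mul_of_dvd_mulVec {A : Matrix κ κ R} {v : κ → R} {d : R}
    (h : ∀ k, d ∣ A.mulVec v k) (r : κ) : d ∣ A.det * v r := by
  have adjugate_mulVec : A.adjugate.mulVec (A.mulVec v) = A.det • v := by
    rw [Matrix.mulVec_mulVec, Matrix.adjugate_mul, Matrix.smul_mulVec, Matrix.one_mulVec]
  rw [← smul_eq_mul, ← Pi.smul_apply, ← adjugate_mulVec]
  exact dvd_sum fun k _ ↦ (h k).mul_left _

theorem natDegree_det_le_card_mul {A : Matrix κ κ R[X]} {d : ℕ}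
    (hA : ∀ k r, (A k r).natDegree ≤ d) : A.det.natDegree ≤ Fintype.card κ * d := by
  rw [Matrix.det_apply]
  refine natDegree_sum_le_of_forall_le _ _ fun σ _ ↦ (natDegree_smul_le _ _).trans ?_
  exact (natDegree_prod_le _ _).trans (sum_le_card_nsmul _ _ _ fun r _ ↦ hA _ _)

theorem coeff_det_card_mul {A : Matrix κ κ R[X]} {d : ℕ} (hA : ∀ k r, (A k r).natDegree ≤ d) :
    A.det.coeff (Fintype.card κ * d) = (A.map fun P ↦ P.coeff d).det := by
  simp only [Matrix.det_apply, finsetSum_coeff, coeff_smul, Matrix.map_apply, ← card_univ,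
    coeff_prod_of_natDegree_le _ _ d fun _ _ ↦ hA _ _]

end Determinants

section PadeDeterminant

variable {N L : ℕ} {H : ℝ} {A : Matrix (Fin N) (Fin N) ℤ[X]}

theorem IsPadeSystem.coeff_det_ne_zero (hA : IsPadeSystem N L H A) : A.det.coeff (N * L) ≠ 0 := by
  have coeff_eq_diagonal :
      (A.map fun P ↦ P.coeff L) = Matrix.diagonal fun k ↦ (A k k).coeff L := by
    ext k r
    rcases eq_or_ne k r with rfl | hkr
    · simp
    · simp [hkr, hA.coeff_eq_zero k r hkr]
  have coeff_det := coeff_det_card_mul hA.natDegree_le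
  rw [Fintype.card_fin, coeff_eq_diagonal, Matrix.det_diagonal] at coeff_det
  rw [coeff_det]
  exact prod_ne_zero_iff.2 fun k _ ↦ hA.coeff_ne_zero k

theorem IsPadeSystem.X_sub_one_pow_dvd_det (hA : IsPadeSystem N L H A) (hN : 0 < N) :
    (X - 1) ^ (N * L) ∣ A.det := by
  have dvd_mul := dvd_det_mul_of_dvd_mulVec (A := A) (v := fun r ↦ X ^ (N * L * r))
    (fun k ↦ by simpa only [Matrix.mulVec, dotProduct, mul_comm] using hA.dvd k) ⟨0, hN⟩
  simpa using dvd_mul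

theorem IsPadeSystem.det_eq (hA : IsPadeSystem N L H A) (hN : 0 < N) :
    A.det = (X - 1) ^ (N * L) * C A.det.leadingCoeff := by
  refine eq_mul_leadingCoeff_of_monic_of_dvd_of_natDegree_le ((monic_X_sub_C 1).pow _)
    (hA.X_sub_one_pow_dvd_det hN) ?_
  rw [← C_1, natDegree_pow, natDegree_X_sub_C, mul_one]
  simpa only [Fintype.card_fin] using natDegree_det_le_card_mul hA.natDegree_le

theorem IsPadeSystem.exists_sum_aeval_ne_zero (hA : IsPadeSystem N L H A) {x : ℝ} (hx : x ≠ 1)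
    {v : Fin N → ℝ} (hv : v ≠ 0) :
    ∃ k, ∑ r, aeval x (A k r) * v r ≠ 0 := by
  have hN : 0 < N := by
    obtain ⟨r, -⟩ := Function.ne_iff.1 hv
    exact r.pos
  have leadingCoeff_ne_zero : A.det.leadingCoeff ≠ 0 :=
    leadingCoeff_ne_zero.2 fun h ↦ hA.coeff_det_ne_zero (by rw [h, coeff_zero])
  have det_ne_zero : (A.map (aeval (R := ℤ) x)).det ≠ 0 := by
    rw [← AlgHom.mapMatrix_apply, ← AlgHom.map_det, hA.det_eq hN]
    simpa [sub_eq_zero, hx] using leadingCoeff_ne_zero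
  by_contra! hzero
  exact hv (Matrix.eq_zero_of_mulVec_eq_zero det_ne_zero (funext hzero))

end PadeDeterminant

/-! ### Size of the forms -/

theorem sum_range_choose_eq {d b : ℕ} : ∑ n ∈ range d, n.choose b = d.choose (b + 1) := by
  induction d with
  | zero => simp
  | succ d ih => rw [sum_range_succ, ih, Nat.choose_succ_succ, add_comm]

theorem sum_range_choose_succ_le_two_pow (d : ℕ) : ∑ b ∈ range d, d.choose (b + 1) ≤ 2 ^ d := by
  rw [← Nat.sum_range_choose, sum_range_succ' _ d]
  exact Nat.le_add_right _ _

theorem abs_coeff_taylor_one_le {P : ℝ[X]} {d : ℕ} {H : ℝ} (hdeg : P.natDegree < d)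
    (hcoeff : ∀ n, |P.coeff n| ≤ H) (b : ℕ) :
    |(taylor 1 P).coeff b| ≤ H * d.choose (b + 1) := by
  have coeff_eq_sum : (taylor 1 P).coeff b = ∑ n ∈ range d, P.coeff n * n.choose b := by
    conv_lhs => rw [P.as_sum_range' d hdeg]
    simp [coeff_X_add_one_pow]
  calc |(taylor 1 P).coeff b|
      ≤ ∑ n ∈ range d, |P.coeff n * n.choose b| := coeff_eq_sum ▸ abs_sum_le_sum_abs _ _
    _ ≤ ∑ n ∈ range d, H * n.choose b := sum_le_sum fun n _ ↦ by
        rw [abs_mul, Nat.abs_cast]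
        exact mul_le_mul_of_nonneg_right (hcoeff n) (Nat.cast_nonneg _)
    _ = H * d.choose (b + 1) := by rw [← mul_sum, ← sum_range_choose_eq, Nat.cast_sum]

theorem abs_eval_le_of_X_sub_one_pow_dvd {P : ℝ[X]} {d K : ℕ} {H x : ℝ}
    (hdvd : (X - 1) ^ K ∣ P) (hdeg : P.natDegree < d) (hcoeff : ∀ n, |P.coeff n| ≤ H)
    (hx : |x - 1| ≤ 1) : |P.eval x| ≤ H * 2 ^ d * |x - 1| ^ K := by
  have H_nonneg : 0 ≤ H := (abs_nonneg _).trans (hcoeff 0)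
  have eval_eq_sum : P.eval x = ∑ b ∈ range d, (taylor 1 P).coeff b * (x - 1) ^ b := by
    rw [← eval_eq_sum_range' (by rwa [natDegree_taylor]), taylor_eval, sub_add_cancel]
  have term_le (b : ℕ) : |(taylor 1 P).coeff b * (x - 1) ^ b| ≤
      H * |x - 1| ^ K * d.choose (b + 1) := by
    rcases lt_or_ge b K with hb | hb
    · rw [X_sub_one_pow_dvd_iff.1 hdvd b hb, zero_mul, abs_zero]
      positivity
    · rw [abs_mul, abs_pow, mul_right_comm]
      exact mul_le_mul (abs_coeff_taylor_one_le hdeg hcoeff b)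
        (pow_le_pow_of_le_one (abs_nonneg _) hx hb) (by positivity) (by positivity)
  calc |P.eval x| ≤ ∑ b ∈ range d, H * |x - 1| ^ K * d.choose (b + 1) :=
        eval_eq_sum ▸ (abs_sum_le_sum_abs _ _).trans (sum_le_sum fun b _ ↦ term_le b)
    _ = H * |x - 1| ^ K * (∑ b ∈ range d, d.choose (b + 1) : ℕ) := by rw [← mul_sum, Nat.cast_sum]
    _ ≤ H * |x - 1| ^ K * (2 ^ d : ℕ) := by gcongr; exact sum_range_choose_succ_le_two_pow d
    _ = H * 2 ^ d * |x - 1| ^ K := by push_cast; ring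

theorem abs_aeval_le_of_X_sub_one_pow_dvd {P : ℤ[X]} {d K : ℕ} {H x : ℝ}
    (hdvd : (X - 1) ^ K ∣ P) (hdeg : P.natDegree < d) (hcoeff : ∀ n, |(P.coeff n : ℝ)| ≤ H)
    (hx : |x - 1| ≤ 1) : |aeval x P| ≤ H * 2 ^ d * |x - 1| ^ K := by
  rw [aeval_def, ← eval_map]
  refine abs_eval_le_of_X_sub_one_pow_dvd ?_ (natDegree_map_le.trans_lt hdeg)
    (by simpa using hcoeff) hx
  simpa using Polynomial.map_dvd (algebraMap ℤ ℝ) hdvd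

theorem abs_pow_sub_one_le {y : ℝ} (hy : |y - 1| ≤ 1) (n : ℕ) :
    |y ^ n - 1| ≤ 2 ^ (n + 1) * |y - 1| := by
  have bound := abs_aeval_le_of_X_sub_one_pow_dvd (P := X ^ n - 1) (d := n + 1) (K := 1) (H := 1)
    (by simpa using sub_dvd_pow_sub_pow (X : ℤ[X]) 1 n)
    (Nat.lt_succ_of_le (by compute_degree)) (fun i ↦ ?_) hy
  · simpa using bound
  · rw [coeff_sub, coeff_X_pow, coeff_one]
    split_ifs <;> norm_num

section PadeForm

variable {N L : ℕ} {H : ℝ} {A : Matrix (Fin N) (Fin N) ℤ[X]}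

/-- The form `∑ r, A r (x) x ^ (N L r) y ^ (N - 1 - r)` attached to a row `A` of a Padé system: it
specialises to the gap-sparse multiple of `(X - 1) ^ (N L)` at `y = 1`. -/
noncomputable def padeForm (L : ℕ) (A : Fin N → ℤ[X]) (x y : ℝ) : ℝ :=
  ∑ r, aeval x (A r) * (x ^ (N * L * r) * y ^ (N - 1 - r : ℕ))

theorem IsPadeSystem.exists_padeForm_ne_zero (hA : IsPadeSystem N L H A) (hN : 0 < N) {x y : ℝ}
    (hx : x ≠ 1) (hx₀ : x ≠ 0) (hy₀ : y ≠ 0) : ∃ k, padeForm L (A k) x y ≠ 0 :=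
  hA.exists_sum_aeval_ne_zero hx fun h ↦
    mul_ne_zero (pow_ne_zero _ hx₀) (pow_ne_zero _ hy₀) (congrFun h ⟨0, hN⟩)

theorem IsPadeSystem.natDegree_sum_lt (hA : IsPadeSystem N L H A) (k : Fin N) :
    (∑ r : Fin N, X ^ (N * L * r) * A k r).natDegree < N * L * N + L + 1 := by
  refine Nat.lt_succ_of_le (natDegree_sum_le_of_forall_le _ _ fun r _ ↦ ?_)
  refine natDegree_mul_le.trans (add_le_add ?_ (hA.natDegree_le k r))
  rw [natDegree_X_pow]
  exact Nat.mul_le_mul_left _ r.2.le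

theorem IsPadeSystem.abs_coeff_sum_le (hA : IsPadeSystem N L H A) (k : Fin N) (n : ℕ) :
    |((∑ r : Fin N, X ^ (N * L * r) * A k r).coeff n : ℝ)| ≤ N * H := by
  have coeff_le (r : Fin N) : |((X ^ (N * L * r) * A k r).coeff n : ℝ)| ≤ H := by
    rw [coeff_X_pow_mul']
    split_ifs
    · exact hA.abs_coeff_le k r _
    · simpa using (abs_nonneg _).trans (hA.abs_coeff_le k r 0)
  rw [finsetSum_coeff, Int.cast_sum]
  simpa using (abs_sum_le_sum_abs _ univ).trans (sum_le_sum fun r _ ↦ coeff_le r)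

theorem IsPadeSystem.abs_padeForm_one_le (hA : IsPadeSystem N L H A) (k : Fin N) {x : ℝ}
    (hx : |x - 1| ≤ 1) :
    |padeForm L (A k) x 1| ≤ N * H * 2 ^ (N * L * N + L + 1) * |x - 1| ^ (N * L) := by
  have form_eq_aeval : padeForm L (A k) x 1 = aeval x (∑ r : Fin N, X ^ (N * L * r) * A k r) := by
    simp [padeForm, mul_comm]
  rw [form_eq_aeval]
  exact abs_aeval_le_of_X_sub_one_pow_dvd (hA.dvd k) (hA.natDegree_sum_lt k)
    (hA.abs_coeff_sum_le k) hx

theorem IsPadeSystem.abs_padeForm_sub_le (hA : IsPadeSystem N L H A) (k : Fin N) {x y : ℝ}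
    (hx : |x - 1| ≤ 1) (hy : |y - 1| ≤ 1) :
    |padeForm L (A k) x y - padeForm L (A k) x 1| ≤
      N * H * 2 ^ (N * L * N + L + 1) * (2 ^ N * |y - 1|) := by
  have H_nonneg : 0 ≤ H := (abs_nonneg _).trans (hA.abs_coeff_le k k 0)
  have abs_x_le : |x| ≤ 2 := by
    rw [abs_le] at hx ⊢
    constructor <;> linarith
  have term_le (r : Fin N) : |aeval x (A k r) * x ^ (N * L * r) * (y ^ (N - 1 - r : ℕ) - 1)| ≤
      (H * 2 ^ (L + 1)) * 2 ^ (N * L * N) * (2 ^ N * |y - 1|) := by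
    have aeval_le := abs_aeval_le_of_X_sub_one_pow_dvd (K := 0) (one_dvd _)
      (Nat.lt_succ_of_le (hA.natDegree_le k r)) (hA.abs_coeff_le k r) hx
    have pow_le : |x ^ (N * L * r)| ≤ 2 ^ (N * L * N) := by
      rw [abs_pow]
      exact (pow_le_pow_left₀ (abs_nonneg _) abs_x_le _).trans
        (pow_le_pow_right₀ one_le_two (Nat.mul_le_mul_left _ r.2.le))
    have sub_le : |y ^ (N - 1 - r : ℕ) - 1| ≤ 2 ^ N * |y - 1| :=
      (abs_pow_sub_one_le hy _).trans (by gcongr <;> grind)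
    rw [pow_zero, mul_one] at aeval_le
    rw [abs_mul, abs_mul]
    gcongr
  calc |padeForm L (A k) x y - padeForm L (A k) x 1|
      = |∑ r : Fin N, aeval x (A k r) * x ^ (N * L * r) * (y ^ (N - 1 - r : ℕ) - 1)| := by
        simp only [padeForm, ← sum_sub_distrib, one_pow]
        congr! 2
        ring
    _ ≤ ∑ _ : Fin N, (H * 2 ^ (L + 1)) * 2 ^ (N * L * N) * (2 ^ N * |y - 1|) :=
        (abs_sum_le_sum_abs _ _).trans (sum_le_sum fun r _ ↦ term_le r)
    _ = _ := by
        rw [sum_const, card_univ, Fintype.card_fin, nsmul_eq_mul]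
        ring

theorem IsPadeSystem.abs_padeForm_le (hA : IsPadeSystem N L H A) (hL : 0 < L) (k : Fin N)
    {x y ε : ℝ} (hx : |x - 1| ≤ 1) (hy : |y - 1| ≤ 1) (hxε : |x - 1| ^ (N * L) ≤ ε)
    (hyε : |y - 1| ≤ ε) :
    |padeForm L (A k) x y| ≤ H * (2 ^ (N * N + 2 * N + 2)) ^ L * ε := by
  have H_nonneg : 0 ≤ H := (abs_nonneg _).trans (hA.abs_coeff_le k k 0)
  have ε_nonneg : 0 ≤ ε := (abs_nonneg _).trans hyε
  have N_mul_le : (N : ℝ) * (1 + 2 ^ N) ≤ 2 ^ (2 * N) := by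
    have succ_le : (N : ℝ) + 1 ≤ 2 ^ N := by exact_mod_cast N.lt_two_pow_self
    rw [mul_comm 2 N, pow_mul]
    nlinarith
  have exponent_le : N * L * N + L + 1 + 2 * N ≤ (N * N + 2 * N + 2) * L := by nlinarith
  calc |padeForm L (A k) x y|
      ≤ |padeForm L (A k) x 1| + |padeForm L (A k) x y - padeForm L (A k) x 1| := by
        simpa using abs_add_le (padeForm L (A k) x 1) (padeForm L (A k) x y - padeForm L (A k) x 1)
    _ ≤ N * H * 2 ^ (N * L * N + L + 1) * ε + N * H * 2 ^ (N * L * N + L + 1) * (2 ^ N * ε) :=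
        add_le_add ((hA.abs_padeForm_one_le k hx).trans (by gcongr))
          ((hA.abs_padeForm_sub_le k hx hy).trans (by gcongr))
    _ = H * (2 ^ (N * L * N + L + 1) * (N * (1 + 2 ^ N))) * ε := by ring
    _ ≤ H * (2 ^ (N * L * N + L + 1) * 2 ^ (2 * N)) * ε := by gcongr
    _ ≤ H * (2 ^ (N * N + 2 * N + 2)) ^ L * ε := by
        rw [← pow_add, ← pow_mul]
        gcongr
        exact one_le_two

end PadeForm

/-! ### Divisibility of the forms -/

/-- `a` is divisible by a power of `p` of size at least `Z`. -/
def HasPowDivisorGE (p : ℕ) (Z : ℝ) (a : ℤ) : Prop :=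
  ∃ n : ℕ, Z ≤ (p : ℝ) ^ n ∧ (p : ℤ) ^ n ∣ a

namespace HasPowDivisorGE

variable {p q : ℕ} {Z W : ℝ} {a b : ℤ}

theorem mono (ha : HasPowDivisorGE p Z a) (hWZ : W ≤ Z) : HasPowDivisorGE p W a :=
  let ⟨n, hn, hdvd⟩ := ha
  ⟨n, hWZ.trans hn, hdvd⟩

theorem of_dvd (ha : HasPowDivisorGE p Z a) (hab : a ∣ b) : HasPowDivisorGE p Z b :=
  let ⟨n, hn, hdvd⟩ := ha
  ⟨n, hn, hdvd.trans hab⟩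

theorem mul (ha : HasPowDivisorGE p Z a) (hb : HasPowDivisorGE p W b) (hW : 0 ≤ W) :
    HasPowDivisorGE p (Z * W) (a * b) :=
  let ⟨n, hn, hdvd⟩ := ha
  let ⟨m, hm, hdvd'⟩ := hb
  ⟨n + m, by rw [pow_add]; gcongr, by rw [pow_add]; exact mul_dvd_mul hdvd hdvd'⟩

theorem pow (ha : HasPowDivisorGE p Z a) (hZ : 0 ≤ Z) (k : ℕ) :
    HasPowDivisorGE p (Z ^ k) (a ^ k) :=
  let ⟨n, hn, hdvd⟩ := ha
  ⟨n * k, by rw [pow_mul]; gcongr, by rw [pow_mul]; exact pow_dvd_pow_of_dvd hdvd k⟩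

theorem add (ha : HasPowDivisorGE p Z a) (hb : HasPowDivisorGE p Z b) :
    HasPowDivisorGE p Z (a + b) := by
  obtain ⟨n, hn, hna⟩ := ha
  obtain ⟨m, hm, hmb⟩ := hb
  refine ⟨min n m, ?_, dvd_add ((pow_dvd_pow _ (min_le_left _ _)).trans hna)
    ((pow_dvd_pow _ (min_le_right _ _)).trans hmb)⟩
  rcases min_choice n m with h | h <;> rwa [h]

theorem zero (hp : 1 < p) : HasPowDivisorGE p Z 0 :=
  let ⟨n, hn⟩ := pow_unbounded_of_one_lt Z (Nat.one_lt_cast.2 hp)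
  ⟨n, hn.le, dvd_zero _⟩

theorem sum (hp : 1 < p) {ι : Type*} {s : Finset ι} {f : ι → ℤ}
    (hf : ∀ i ∈ s, HasPowDivisorGE p Z (f i)) : HasPowDivisorGE p Z (∑ i ∈ s, f i) :=
  sum_induction f _ (fun _ _ ↦ add) (zero hp) hf

theorem mul_le_abs (hpq : p.Coprime q) (hp : HasPowDivisorGE p Z a)
    (hq : HasPowDivisorGE q W a) (hW : 0 ≤ W) (ha : a ≠ 0) : Z * W ≤ |(a : ℝ)| := by
  obtain ⟨n, hn, hpa⟩ := hp
  obtain ⟨m, hm, hqa⟩ := hq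
  have coprime : IsCoprime ((p : ℤ) ^ n) ((q : ℤ) ^ m) := (Nat.isCoprime_iff_coprime.2 hpq).pow
  calc Z * W ≤ (p : ℝ) ^ n * (q : ℝ) ^ m := by gcongr
    _ ≤ |(a : ℝ)| := by
      exact_mod_cast Int.le_of_dvd (abs_pos.2 ha) ((dvd_abs _ _).2 (coprime.mul_dvd hpa hqa))

theorem pow_mul_pow (ha : HasPowDivisorGE p Z a) (hb : HasPowDivisorGE p W b) (hZ : 1 ≤ Z) {M : ℕ}
    (hZW : Z ^ M ≤ W) (r s i : ℕ) :
    HasPowDivisorGE p (Z ^ (M * (r + s))) (a ^ (M * r + i) * b ^ s) := by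
  have Z_nonneg : 0 ≤ Z := zero_le_one.trans hZ
  have W_nonneg : 0 ≤ W := (pow_nonneg Z_nonneg M).trans hZW
  refine ((ha.pow Z_nonneg _).mul (hb.pow W_nonneg _) (pow_nonneg W_nonneg _)).mono ?_
  calc Z ^ (M * (r + s)) = Z ^ (M * r) * (Z ^ M) ^ s := by rw [mul_add, pow_add, pow_mul Z M s]
    _ ≤ Z ^ (M * r + i) * W ^ s := by gcongr; lia

end HasPowDivisorGE

section HomogeneousForm

variable {N L : ℕ}

/-- The integral homogenisation of `padeForm`, evaluated at the fractions `a₁ / b₁` and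
`a₂ / b₂`. -/
def homPadeForm (L : ℕ) (A : Fin N → ℤ[X]) (a₁ b₁ a₂ b₂ : ℤ) : ℤ :=
  ∑ r : Fin N, ∑ i ∈ range (L + 1), (A r).coeff i *
    ((a₁ ^ (N * L * r + i) * a₂ ^ (N - 1 - r : ℕ)) *
      (b₁ ^ (N * L * (N - 1 - r : ℕ) + (L - i)) * b₂ ^ (r : ℕ)))

theorem homPadeForm_eq {A : Fin N → ℤ[X]} (hA : ∀ r, (A r).natDegree ≤ L) {a₁ b₁ a₂ b₂ : ℤ}
    (hb₁ : b₁ ≠ 0) (hb₂ : b₂ ≠ 0) :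
    (homPadeForm L A a₁ b₁ a₂ b₂ : ℝ) =
      b₁ ^ (N * L * (N - 1) + L) * b₂ ^ (N - 1) * padeForm L A (a₁ / b₁ : ℝ) (a₂ / b₂ : ℝ) := by
  have : (b₁ : ℝ) ≠ 0 := Int.cast_ne_zero.2 hb₁
  have : (b₂ : ℝ) ≠ 0 := Int.cast_ne_zero.2 hb₂
  rw [homPadeForm, padeForm, Int.cast_sum, mul_sum]
  refine sum_congr rfl fun r _ ↦ ?_
  rw [aeval_eq_sum_range' (Nat.lt_succ_of_le (hA r)), sum_mul, mul_sum, Int.cast_sum]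
  refine sum_congr rfl fun i hi ↦ ?_
  obtain ⟨s, hs⟩ : ∃ s, N - 1 = r + s := Nat.exists_eq_add_of_le (by grind)
  obtain ⟨j, hj⟩ : ∃ j, L = i + j := Nat.exists_eq_add_of_le (by grind)
  rw [hs, show L - i = j by lia, show (r + s - r : ℕ) = s by lia,
    show N * L * (r + s) + L = (N * L * r + i) + (N * L * s + j) by rw [mul_add]; lia]
  simp only [zsmul_eq_mul, div_pow, Int.cast_mul, Int.cast_pow, pow_add]
  field_simp

theorem HasPowDivisorGE.homPadeForm_left {p : ℕ} (hp : 1 < p) {Z W : ℝ} {a₁ a₂ : ℤ}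
    (ha₁ : HasPowDivisorGE p Z a₁) (ha₂ : HasPowDivisorGE p W a₂) (hZ : 1 ≤ Z)
    (hZW : Z ^ (N * L) ≤ W) (A : Fin N → ℤ[X]) (b₁ b₂ : ℤ) :
    HasPowDivisorGE p (Z ^ (N * L * (N - 1))) (homPadeForm L A a₁ b₁ a₂ b₂) := by
  refine .sum hp fun r _ ↦ .sum hp fun i _ ↦ ?_
  have := ha₁.pow_mul_pow ha₂ hZ hZW r (N - 1 - r) i
  rw [show (r + (N - 1 - r) : ℕ) = N - 1 by lia] at this
  exact this.of_dvd ((dvd_mul_right _ _).mul_left _)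

theorem HasPowDivisorGE.homPadeForm_right {q : ℕ} (hq : 1 < q) {Z W : ℝ} {b₁ b₂ : ℤ}
    (hb₁ : HasPowDivisorGE q Z b₁) (hb₂ : HasPowDivisorGE q W b₂) (hZ : 1 ≤ Z)
    (hZW : Z ^ (N * L) ≤ W) (A : Fin N → ℤ[X]) (a₁ a₂ : ℤ) :
    HasPowDivisorGE q (Z ^ (N * L * (N - 1))) (homPadeForm L A a₁ b₁ a₂ b₂) := by
  refine .sum hq fun r _ ↦ .sum hq fun i _ ↦ ?_
  have := hb₁.pow_mul_pow hb₂ hZ hZW (N - 1 - r) r (L - i)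
  rw [show (N - 1 - r + r : ℕ) = N - 1 by lia] at this
  exact this.of_dvd ((dvd_mul_left _ _).mul_left _)

end HomogeneousForm

/-! ### Near pairs -/

/-- Positive integers `a` and `b` of logarithmic height at most `h` whose ratio is within
`exp (-c * h)` of `1`, while all of `a` but a factor `exp (δ * h)` is a power of `p` and all of `b`
but such a factor is a power of `q`. -/
structure IsNearPair (p q : ℕ) (c δ h : ℝ) (a b : ℤ) : Prop where
  pos_left : 0 < a
  pos_right : 0 < b
  left_le : (a : ℝ) ≤ Real.exp h
  right_le : (b : ℝ) ≤ Real.exp h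
  left_dvd : HasPowDivisorGE p (Real.exp ((1 - δ) * h)) a
  right_dvd : HasPowDivisorGE q (Real.exp ((1 - δ) * h)) b
  abs_div_sub_one_le : |(a / b : ℝ) - 1| ≤ Real.exp (-(c * h))

section NearPairs

variable {p q : ℕ} {c δ h h₁ h₂ : ℝ} {a b a₁ b₁ a₂ b₂ : ℤ}

theorem IsNearPair.ne (hpq : p.Coprime q) (hab : IsNearPair p q c δ h a b) (hδ : δ < 1 / 2)
    (hh : 0 < h) : a ≠ b := by
  rintro rfl
  have exp_mul_exp_le := hab.left_dvd.mul_le_abs hpq hab.right_dvd (Real.exp_nonneg _)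
    hab.pos_left.ne'
  rw [← Real.exp_add, abs_of_pos (by exact_mod_cast hab.pos_left)] at exp_mul_exp_le
  have := Real.exp_le_exp.1 (exp_mul_exp_le.trans hab.left_le)
  nlinarith

variable {N L : ℕ} {H : ℝ} {A : Matrix (Fin N) (Fin N) ℤ[X]}

theorem IsNearPair.abs_homPadeForm_le (h₁ab : IsNearPair p q c δ h₁ a₁ b₁)
    (h₂ab : IsNearPair p q c δ h₂ a₂ b₂) (hc : 0 ≤ c) (hh₁ : 0 ≤ h₁) (hh : N * L * h₁ ≤ h₂)
    (hA : IsPadeSystem N L H A) (hL : 0 < L) (k : Fin N) :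
    |(homPadeForm L (A k) a₁ b₁ a₂ b₂ : ℝ)| ≤
      Real.exp h₁ ^ (N * L * (N - 1) + L) * Real.exp h₂ ^ (N - 1) *
        (H * (2 ^ (N * N + 2 * N + 2)) ^ L * Real.exp (-(c * (N * L * h₁)))) := by
  have hh₂ : 0 ≤ h₂ := le_trans (by positivity) hh
  have le_one {h : ℝ} (hh : 0 ≤ h) : Real.exp (-(c * h)) ≤ 1 :=
    Real.exp_le_one_iff.2 (neg_nonpos.2 (mul_nonneg hc hh))
  have form_le := hA.abs_padeForm_le hL k (h₁ab.abs_div_sub_one_le.trans (le_one hh₁))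
    (h₂ab.abs_div_sub_one_le.trans (le_one hh₂)) (ε := Real.exp (-(c * (N * L * h₁))))
    ((pow_le_pow_left₀ (abs_nonneg _) h₁ab.abs_div_sub_one_le _).trans_eq
      (by rw [← Real.exp_nat_mul]; push_cast; ring_nf))
    (h₂ab.abs_div_sub_one_le.trans
      (Real.exp_le_exp.2 (neg_le_neg (mul_le_mul_of_nonneg_left hh hc))))
  have b₁_nonneg : (0 : ℝ) ≤ b₁ := by exact_mod_cast h₁ab.pos_right.le
  have b₂_nonneg : (0 : ℝ) ≤ b₂ := by exact_mod_cast h₂ab.pos_right.le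
  rw [homPadeForm_eq (hA.natDegree_le k) h₁ab.pos_right.ne' h₂ab.pos_right.ne', abs_mul,
    abs_of_nonneg (by positivity)]
  gcongr
  exacts [h₁ab.right_le, h₂ab.right_le]

theorem IsNearPair.le_abs_homPadeForm (hp : 1 < p) (hq : 1 < q) (hpq : p.Coprime q)
    (h₁ab : IsNearPair p q c δ h₁ a₁ b₁) (h₂ab : IsNearPair p q c δ h₂ a₂ b₂) (hδ : δ ≤ 1)
    (hh₁ : 0 ≤ h₁) (hh : N * L * h₁ ≤ h₂) {A : Fin N → ℤ[X]}
    (hne : homPadeForm L A a₁ b₁ a₂ b₂ ≠ 0) :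
    Real.exp ((1 - δ) * h₁) ^ (N * L * (N - 1)) * Real.exp ((1 - δ) * h₁) ^ (N * L * (N - 1)) ≤
      |(homPadeForm L A a₁ b₁ a₂ b₂ : ℝ)| := by
  have one_le : 1 ≤ Real.exp ((1 - δ) * h₁) := Real.one_le_exp (mul_nonneg (sub_nonneg.2 hδ) hh₁)
  have pow_le : Real.exp ((1 - δ) * h₁) ^ (N * L) ≤ Real.exp ((1 - δ) * h₂) := by
    rw [← Real.exp_nat_mul, Real.exp_le_exp, mul_left_comm]
    push_cast
    exact mul_le_mul_of_nonneg_left hh (sub_nonneg.2 hδ)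
  exact HasPowDivisorGE.mul_le_abs hpq
    (h₁ab.left_dvd.homPadeForm_left hp h₂ab.left_dvd one_le pow_le A b₁ b₂)
    (h₁ab.right_dvd.homPadeForm_right hq h₂ab.right_dvd one_le pow_le A a₁ a₂)
    (by positivity) hne

theorem IsNearPair.exists_homPadeForm_ne_zero (h₁ab : IsNearPair p q c δ h₁ a₁ b₁)
    (h₂ab : IsNearPair p q c δ h₂ a₂ b₂) (hne : a₁ ≠ b₁) (hA : IsPadeSystem N L H A)
    (hN : 0 < N) : ∃ k, homPadeForm L (A k) a₁ b₁ a₂ b₂ ≠ 0 := by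
  have cast_ne {a : ℤ} (ha : 0 < a) : (a : ℝ) ≠ 0 := Int.cast_ne_zero.2 ha.ne'
  obtain ⟨k, hk⟩ := hA.exists_padeForm_ne_zero hN (x := a₁ / b₁) (y := a₂ / b₂)
    (by rwa [Ne, div_eq_one_iff_eq (cast_ne h₁ab.pos_right), Int.cast_inj])
    (div_ne_zero (cast_ne h₁ab.pos_left) (cast_ne h₁ab.pos_right))
    (div_ne_zero (cast_ne h₂ab.pos_left) (cast_ne h₂ab.pos_right))
  refine ⟨k, fun hzero ↦ ?_⟩
  have := homPadeForm_eq (hA.natDegree_le k) h₁ab.pos_right.ne' h₂ab.pos_right.ne'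
    (a₁ := a₁) (a₂ := a₂)
  rw [hzero, Int.cast_zero, eq_comm, mul_eq_zero] at this
  exact this.elim (mul_ne_zero (pow_ne_zero _ (cast_ne h₁ab.pos_right))
    (pow_ne_zero _ (cast_ne h₂ab.pos_right))) hk

theorem IsNearPair.height_le (hp : 1 < p) (hq : 1 < q) (hpq : p.Coprime q)
    (h₁ab : IsNearPair p q c δ h₁ a₁ b₁) (h₂ab : IsNearPair p q c δ h₂ a₂ b₂) (hne : a₁ ≠ b₁)
    (hc : 0 ≤ c) (hδ : δ ≤ 1) (hh₁ : 0 ≤ h₁) (hh : N * L * h₁ ≤ h₂) {C : ℝ} (hC : 0 < C)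
    (hA : IsPadeSystem N L (C ^ L) A) (hN : 0 < N) (hL : 0 < L) :
    2 * ((N * L * (N - 1)) * ((1 - δ) * h₁)) ≤ (N * L * (N - 1) + L) * h₁ + (N - 1) * h₂ +
      L * Real.log (C * 2 ^ (N * N + 2 * N + 2)) - c * (N * L * h₁) := by
  obtain ⟨k, hk⟩ := h₁ab.exists_homPadeForm_ne_zero h₂ab hne hA hN
  have bounds := (le_abs_homPadeForm hp hq hpq h₁ab h₂ab hδ hh₁ hh hk).trans
    (h₁ab.abs_homPadeForm_le h₂ab hc hh₁ hh hA hL k)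
  rw [← mul_pow C, ← Real.exp_log (show 0 < C * 2 ^ (N * N + 2 * N + 2) by positivity)] at bounds
  simp only [← Real.exp_nat_mul, ← Real.exp_add, Real.exp_le_exp] at bounds
  push_cast [Nat.cast_pred hN] at bounds
  linarith

theorem height_inequality_lt {N L h h₂ κ : ℝ} (hN : 1 ≤ N) (hL : N ^ 2 ≤ L) (hh : 0 < h)
    (hκ : 2 * κ ≤ h) (hh₂ : h₂ ≤ N * (L + 1) * h) :
    (N * L * (N - 1) + L) * h + (N - 1) * h₂ + L * κ - 4 / N * (N * L * h) <
      2 * ((N * L * (N - 1)) * ((1 - 1 / (4 * N ^ 2)) * h)) := by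
  have N_pos : 0 < N := by linarith
  have L_pos : 0 < L := lt_of_lt_of_le (by positivity) hL
  have main_term : (N - 1) * h₂ ≤ (N - 1) * (N * (L + 1) * h) :=
    mul_le_mul_of_nonneg_left hh₂ (by linarith)
  have constant_term : L * κ ≤ L * h / 2 := by nlinarith
  have power_loss : 2 * ((N * L * (N - 1)) * (1 / (4 * N ^ 2) * h)) ≤ L * h / 2 := by
    have cancel : 2 * ((N * L * (N - 1)) * (1 / (4 * N ^ 2) * h)) = L * h / 2 * ((N - 1) / N) := by
      field_simp
      ring
    rw [cancel]
    exact mul_le_of_le_one_right (by positivity) ((div_le_one N_pos).2 (by linarith))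
  have rounding_loss : (N - 1) * (N * h) ≤ L * h := by nlinarith
  have gain : 4 / N * (N * L * h) = 4 * (L * h) := by field_simp
  nlinarith [mul_pos L_pos hh]

theorem IsNearPair.exists_height_lt {N : ℕ} (hN : 2 ≤ N) :
    ∃ h₀ : ℝ, ∀ {p q : ℕ}, 1 < p → 1 < q → p.Coprime q →
      ∀ {h₁ h₂ : ℝ} {a₁ b₁ a₂ b₂ : ℤ}, h₀ ≤ h₁ →
        IsNearPair p q (4 / N) (1 / (4 * N ^ 2)) h₁ a₁ b₁ →
        IsNearPair p q (4 / N) (1 / (4 * N ^ 2)) h₂ a₂ b₂ → h₂ < N ^ 3 * h₁ := by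
  obtain ⟨C, C_pos, exists_pade⟩ := exists_isPadeSystem hN
  set κ := Real.log (C * 2 ^ (N * N + 2 * N + 2))
  refine ⟨max 1 (2 * κ), fun {p q} hp hq hpq {h₁ h₂ a₁ b₁ a₂ b₂} hh₀ h₁ab h₂ab ↦ ?_⟩
  have h₁_pos : 0 < h₁ := one_pos.trans_le ((le_max_left _ _).trans hh₀)
  have two_le_N : (2 : ℝ) ≤ N := by exact_mod_cast hN
  have Nh₁_pos : 0 < N * h₁ := by positivity
  by_contra! le_h₂
  set L := ⌊h₂ / (N * h₁)⌋₊
  have sq_le : (N : ℝ) ^ 2 ≤ h₂ / (N * h₁) := by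
    rw [le_div_iff₀ Nh₁_pos]
    linarith
  have sq_le_L : (N : ℝ) ^ 2 ≤ L := by exact_mod_cast Nat.le_floor (by exact_mod_cast sq_le)
  have L_pos : 0 < L := Nat.cast_pos.1 (lt_of_lt_of_le (by positivity) sq_le_L)
  have mul_le_h₂ : N * L * h₁ ≤ h₂ := by
    have := (le_div_iff₀ Nh₁_pos).1 (Nat.floor_le (le_trans (by positivity) sq_le))
    linarith
  have h₂_lt : h₂ < N * (L + 1) * h₁ := by
    have := (div_lt_iff₀ Nh₁_pos).1 (Nat.lt_floor_add_one (h₂ / (N * h₁)))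
    linarith
  have δ_lt : 1 / (4 * (N : ℝ) ^ 2) < 1 / 2 := by
    rw [div_lt_div_iff₀ (by positivity) two_pos]
    nlinarith
  obtain ⟨A, hA⟩ := exists_pade L L_pos
  exact (h₁ab.height_le hp hq hpq h₂ab (h₁ab.ne hpq δ_lt h₁_pos) (by positivity) (by linarith)
    h₁_pos.le mul_le_h₂ C_pos hA (by lia) L_pos).not_gt
    (height_inequality_lt (by linarith) sq_le_L h₁_pos ((le_max_right _ _).trans hh₀) h₂_lt.le)

end NearPairs

/-! ### Gaps between the digits -/

theorem exists_eq_add_one_of_monotone_of_le {f : ℕ → ℕ} (hf : Monotone f) {B : ℕ}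
    (hB : ∀ n, f n ≤ B) : ∃ n ≤ B, f n = f (n + 1) := by
  by_contra! f_ne
  have le_f : ∀ n ≤ B + 1, n ≤ f n := by
    intro n
    induction n with
    | zero => simp
    | succ n ih =>
      intro hn
      have := (hf n.le_succ).lt_of_ne (f_ne n (by lia))
      have := ih (by lia)
      lia
  exact (le_f (B + 1) le_rfl).not_gt (Nat.lt_succ_of_le (hB _))

theorem sum_take_mono (l : List ℕ) : Monotone fun n ↦ (l.take n).sum :=
  fun _ _ h ↦ (List.take_sublist_take_left h).sum_le_sum fun _ _ ↦ Nat.zero_le _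

theorem mod_pow_eq_of_sum_take_digits_eq {p x d e : ℕ} (hp : 1 < p) (hde : d ≤ e)
    (h : ((p.digits x).take d).sum = ((p.digits x).take e).sum) : x % p ^ e = x % p ^ d := by
  obtain ⟨k, rfl⟩ := Nat.exists_eq_add_of_le hde
  rw [List.take_add, List.sum_append, left_eq_add, List.sum_eq_zero_iff_forall_eq_nat] at h
  rw [Nat.self_mod_pow_eq_ofDigits_take _ _ hp, Nat.self_mod_pow_eq_ofDigits_take _ _ hp,
    List.take_add, List.eq_replicate_of_mem h, Nat.ofDigits_append_replicate_zero]

theorem le_pow_clog_ceil {p : ℕ} (hp : 1 < p) (Z : ℝ) : Z ≤ (p : ℝ) ^ Nat.clog p ⌈Z⌉₊ :=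
  (Nat.le_ceil Z).trans (by exact_mod_cast Nat.le_pow_clog hp _)

theorem pow_clog_ceil_le {p : ℕ} (hp : 1 < p) {Z : ℝ} (hZ : 1 ≤ Z) :
    (p : ℝ) ^ Nat.clog p ⌈Z⌉₊ ≤ p * Z := by
  have one_le : (1 : ℝ) ≤ p := by exact_mod_cast hp.le
  rcases h : Nat.clog p ⌈Z⌉₊ with - | n
  · simpa using one_le_mul_of_one_le_of_one_le one_le hZ
  · have pow_lt : p ^ n < ⌈Z⌉₊ := (Nat.lt_clog_iff_pow_lt hp).1 (h ▸ n.lt_succ_self)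
    rw [pow_succ']
    gcongr
    exact_mod_cast (Nat.lt_ceil.1 pow_lt).le

theorem abs_sub_div_sub_sub_one_le {x m n u : ℝ} (hx : 0 < x) (hm : 0 ≤ m) (hn : 0 ≤ n)
    (hu : u ≤ 1 / 2) (hmn : m + n ≤ u / 2 * x) : |(x - m) / (x - n) - 1| ≤ u := by
  have sub_pos : 0 < x - n := by nlinarith
  rw [div_sub_one sub_pos.ne', abs_div, abs_of_pos sub_pos, div_le_iff₀ sub_pos, abs_le]
  constructor <;> nlinarith

theorem isNearPair_sub {p q x m n : ℕ} {c δ : ℝ} (hx : 0 < x)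
    (hm : HasPowDivisorGE p (Real.exp ((1 - δ) * Real.log x)) (x - m))
    (hn : HasPowDivisorGE q (Real.exp ((1 - δ) * Real.log x)) (x - n))
    (hc : Real.exp (-(c * Real.log x)) ≤ 1 / 2)
    (hmn : (m + n : ℝ) ≤ Real.exp (-(c * Real.log x)) / 2 * x) :
    IsNearPair p q c δ (Real.log x) (x - m) (x - n) := by
  have x_pos : (0 : ℝ) < x := by exact_mod_cast hx
  have add_lt : (m + n : ℝ) < x := hmn.trans_lt (by nlinarith)
  have add_lt : m + n < x := by exact_mod_cast add_lt
  refine ⟨by lia, by lia, ?_, ?_, hm, hn, ?_⟩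
  · simp [Real.exp_log x_pos]
  · simp [Real.exp_log x_pos]
  · push_cast
    exact abs_sub_div_sub_sub_one_le x_pos m.cast_nonneg n.cast_nonneg hc hmn

/-- The parameters `N` at which gaps between digits are sought, chosen so that
`8 / gapScale (i + 1) = 1 / (4 * gapScale i ^ 2)`: twice the exponent `c = 4 / N` of one level is
the loss `δ = 1 / (4 * N ^ 2)` of the previous one. -/
def gapScale : ℕ → ℕ
  | 0 => 8
  | i + 1 => 32 * gapScale i ^ 2

theorem eight_le_gapScale (i : ℕ) : 8 ≤ gapScale i := by
  induction i with
  | zero => rfl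
  | succ i ih =>
    rw [gapScale]
    nlinarith

theorem gapScale_pos (i : ℕ) : (0 : ℝ) < gapScale i := by
  exact_mod_cast (eight_le_gapScale i).trans_lt' (by norm_num)

theorem gapScale_monotone : Monotone gapScale :=
  monotone_nat_of_le_succ fun i ↦ by
    have := eight_le_gapScale i
    rw [gapScale]
    nlinarith

/-- The exponent of the first power of `p` that is at least `x ^ (1 - 8 / gapScale i)`. -/
noncomputable def cutoff (p x i : ℕ) : ℕ :=
  Nat.clog p ⌈Real.exp ((1 - 8 / gapScale i) * Real.log x)⌉₊

theorem cutoff_monotone (p x : ℕ) : Monotone (cutoff p x) := by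
  intro i j hij
  have scale_pos := gapScale_pos i
  have scale_le : (gapScale i : ℝ) ≤ gapScale j := by exact_mod_cast gapScale_monotone hij
  have := Real.log_natCast_nonneg x
  unfold cutoff
  gcongr

theorem exists_cutoff_mod_eq {p q x s t : ℕ} (hp : 1 < p) (hq : 1 < q)
    (hs : (p.digits x).sum ≤ s) (ht : (q.digits x).sum ≤ t) :
    ∃ i ≤ s + t, x % p ^ cutoff p x (i + 1) = x % p ^ cutoff p x i ∧
      x % q ^ cutoff q x (i + 1) = x % q ^ cutoff q x i := by
  let lowDigitSum (r i : ℕ) : ℕ := ((r.digits x).take (cutoff r x i)).sum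
  have mono (r : ℕ) : Monotone (lowDigitSum r) :=
    (sum_take_mono (r.digits x)).comp (cutoff_monotone r x)
  have le_sum (r i : ℕ) : lowDigitSum r i ≤ (r.digits x).sum :=
    (List.take_sublist _ _).sum_le_sum fun _ _ ↦ Nat.zero_le _
  obtain ⟨i, hi, sum_eq⟩ := exists_eq_add_one_of_monotone_of_le ((mono p).add (mono q))
    fun i ↦ add_le_add ((le_sum p i).trans hs) ((le_sum q i).trans ht)
  replace sum_eq : lowDigitSum p i + lowDigitSum q i =
    lowDigitSum p (i + 1) + lowDigitSum q (i + 1) := sum_eq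
  have le_p := mono p i.le_succ
  have le_q := mono q i.le_succ
  exact ⟨i, hi,
    mod_pow_eq_of_sum_take_digits_eq hp (cutoff_monotone p x i.le_succ) (by lia),
    mod_pow_eq_of_sum_take_digits_eq hq (cutoff_monotone q x i.le_succ) (by lia)⟩

theorem mod_pow_cutoff_le {p x : ℕ} (hp : 1 < p) (i : ℕ) :
    ((x % p ^ cutoff p x i : ℕ) : ℝ) ≤ p * Real.exp ((1 - 8 / gapScale i) * Real.log x) := by
  have scale_le : (8 : ℝ) ≤ gapScale i := by exact_mod_cast eight_le_gapScale i
  have one_le : 1 ≤ Real.exp ((1 - 8 / gapScale i) * Real.log x) :=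
    Real.one_le_exp (mul_nonneg (sub_nonneg.2 (div_le_one_of_le₀ scale_le (by positivity)))
      (Real.log_natCast_nonneg x))
  have mod_lt : x % p ^ cutoff p x i < p ^ cutoff p x i := Nat.mod_lt _ (by positivity)
  calc ((x % p ^ cutoff p x i : ℕ) : ℝ) ≤ (p : ℝ) ^ cutoff p x i := by exact_mod_cast mod_lt.le
    _ ≤ _ := pow_clog_ceil_le hp one_le

theorem hasPowDivisorGE_sub_mod_pow_cutoff {p x : ℕ} (hp : 1 < p) (i : ℕ) :
    HasPowDivisorGE p (Real.exp ((1 - 1 / (4 * gapScale i ^ 2)) * Real.log x))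
      (x - (x % p ^ cutoff p x (i + 1) : ℕ)) := by
  refine ⟨cutoff p x (i + 1), ?_, by push_cast; exact Int.dvd_self_sub_emod⟩
  have scale_eq : (8 / gapScale (i + 1) : ℝ) = 1 / (4 * gapScale i ^ 2) := by
    rw [gapScale]
    push_cast
    ring
  rw [← scale_eq]
  exact le_pow_clog_ceil hp _

theorem exists_isNearPair {p q x s t : ℕ} (hp : 1 < p) (hq : 1 < q) (hx : 0 < x)
    (hs : (p.digits x).sum ≤ s) (ht : (q.digits x).sum ≤ t)
    (hlog : Real.log (2 * (p + q)) ≤ 4 / gapScale (s + t) * Real.log x) :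
    ∃ i ≤ s + t, ∃ a b : ℤ,
      IsNearPair p q (4 / gapScale i) (1 / (4 * gapScale i ^ 2)) (Real.log x) a b := by
  obtain ⟨i, hi, hpi, hqi⟩ := exists_cutoff_mod_eq hp hq hs ht
  have mod_p_le := mod_pow_cutoff_le (x := x) hp i
  have mod_q_le := mod_pow_cutoff_le (x := x) hq i
  have one_lt_p : (1 : ℝ) < p := by exact_mod_cast hp
  have one_lt_q : (1 : ℝ) < q := by exact_mod_cast hq
  have scale_pos := gapScale_pos i
  have scale_le : (gapScale i : ℝ) ≤ gapScale (s + t) := by exact_mod_cast gapScale_monotone hi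
  have exp_le : Real.exp (-(4 / gapScale i * Real.log x)) ≤ (2 * (p + q) : ℝ)⁻¹ := by
    rw [← Real.exp_log (show 0 < (2 * (p + q) : ℝ)⁻¹ by positivity), Real.log_inv]
    have := Real.log_natCast_nonneg x
    gcongr
    refine hlog.trans ?_
    gcongr
  have exp_eq : Real.exp ((1 - 8 / gapScale i) * Real.log x) =
      Real.exp (-(4 / gapScale i * Real.log x)) *
        Real.exp (-(4 / gapScale i * Real.log x)) * x := by
    rw [show (1 - 8 / gapScale i) * Real.log x =
      -(4 / gapScale i * Real.log x) + -(4 / gapScale i * Real.log x) + Real.log x by ring,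
      Real.exp_add, Real.exp_add, Real.exp_log (by exact_mod_cast hx)]
  rw [← hpi, exp_eq] at mod_p_le
  rw [← hqi, exp_eq] at mod_q_le
  refine ⟨i, hi, _, _, isNearPair_sub hx (hasPowDivisorGE_sub_mod_pow_cutoff hp i)
    (hasPowDivisorGE_sub_mod_pow_cutoff hq i) (exp_le.trans ?_) ?_⟩
  · rw [one_div]
    gcongr
    linarith
  set u := Real.exp (-(4 / gapScale i * Real.log x))
  calc _ ≤ (p + q) * (u * u * x) := by linarith
    _ ≤ (p + q) * ((2 * (p + q) : ℝ)⁻¹ * u * x) := by gcongr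
    _ = u / 2 * x := by field_simp

/-! ### Finiteness -/

theorem eventually_le_log_natCast (B : ℝ) : ∀ᶠ x : ℕ in Filter.atTop, B ≤ Real.log x :=
  (Real.tendsto_log_atTop.comp tendsto_natCast_atTop_atTop).eventually_ge_atTop B

theorem finite_setOf_exists_isNearPair {p q : ℕ} (hp : 1 < p) (hq : 1 < q) (hpq : p.Coprime q)
    {N : ℕ} (hN : 2 ≤ N) :
    {x : ℕ | ∃ a b : ℤ, IsNearPair p q (4 / N) (1 / (4 * N ^ 2)) (Real.log x) a b}.Finite := by
  obtain ⟨h₀, height_lt⟩ := IsNearPair.exists_height_lt hN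
  by_contra infinite
  have exists_large (B : ℝ) := ((Nat.frequently_atTop_iff_infinite.2 infinite).and_eventually
    (eventually_le_log_natCast B)).exists
  obtain ⟨x₁, ⟨a₁, b₁, h₁⟩, le_log_x₁⟩ := exists_large h₀
  obtain ⟨x₂, ⟨a₂, b₂, h₂⟩, le_log_x₂⟩ := exists_large (N ^ 3 * Real.log x₁)
  exact (height_lt hp hq hpq le_log_x₁ h₁ h₂).not_ge le_log_x₂

theorem senge_straus_general {p q : ℕ} (hp : 1 < p) (hq : 1 < q) (hpq : p.Coprime q)
    (s t : ℕ) :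
    {x : ℕ | (Nat.digits p x).sum ≤ s ∧ (Nat.digits q x).sum ≤ t}.Finite := by
  have near_finite : (⋃ i ∈ Set.Iic (s + t), {x : ℕ | ∃ a b : ℤ, IsNearPair p q (4 / gapScale i)
      (1 / (4 * gapScale i ^ 2)) (Real.log x) a b}).Finite :=
    (Set.finite_Iic (s + t)).biUnion fun i _ ↦
      finite_setOf_exists_isNearPair hp hq hpq ((eight_le_gapScale i).trans' (by norm_num))
  have eventually_large : ∀ᶠ x : ℕ in Filter.atTop,
      0 < x ∧ Real.log (2 * (p + q)) / (4 / gapScale (s + t)) ≤ Real.log x :=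
    (Filter.eventually_gt_atTop 0).and (eventually_le_log_natCast _)
  have small_finite := Filter.eventually_cofinite.1 (Nat.cofinite_eq_atTop ▸ eventually_large)
  refine (near_finite.union small_finite).subset ?_
  rintro x ⟨hs, ht⟩
  refine or_iff_not_imp_right.2 fun large ↦ ?_
  obtain ⟨x_pos, hlog⟩ := not_not.1 large
  have scale_pos := gapScale_pos (s + t)
  obtain ⟨i, hi, hab⟩ := exists_isNearPair hp hq x_pos hs ht ((div_le_iff₀' (by positivity)).1 hlog)
  exact Set.mem_biUnion (Set.mem_Iic.2 hi) hab

/-- Senge–Straus theorem: for distinct primes `p` and `q` and fixed bounds `s`, `t`, there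
are only finitely many natural numbers whose base-`p` digit sum is at most `s` and whose
base-`q` digit sum is at most `t`. -/
theorem senge_straus {p q : ℕ} (hp : p.Prime) (hq : q.Prime) (hpq : p ≠ q)
    (s t : ℕ) (hs : 0 < s) (ht : 0 < t) :
    {x : ℕ | (Nat.digits p x).sum ≤ s ∧ (Nat.digits q x).sum ≤ t}.Finite :=
  senge_straus_general hp.one_lt hq.one_lt ((Nat.coprime_primes hp hq).2 hpq) s t
end
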